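/- Let f ∈ W^{2,p}(R^n), 1 ≤ p < ∞. Then the precise representative f* is p-Lipschitz quasicontinuous: for every ε > 0 there exists an open set V ⊂ R^n with cap_p(V) ≤ ε such that f* restricted to R^n \ V is Lipschitz continuous. -/

import Mathlib

open MeasureTheory Metric Filter Set
open scoped ENNReal Topology NNReal

noncomputable section

/-- Euclidean space ℝⁿ. -/
abbrev En (n : ℕ) := EuclideanSpace ℝ (Fin n)

variable {n : ℕ}

/-- The average of `f` over the ball `B(x,r)`. -/
def ballAvg (f : En n → ℝ) (x : En n) (r : ℝ) : ℝ :=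
  ⨍ y in Metric.ball x r, f y

open scoped Classical in
/-- The precise representative of `f`: the limit of ball averages where it exists, `0` otherwise. -/
def preciseRep (f : En n → ℝ) (x : En n) : ℝ :=
  if h : ∃ L : ℝ, Tendsto (fun r => ballAvg f x r) (nhdsWithin 0 (Set.Ioi 0)) (nhds L)
  then h.choose else 0

/-- A test function: smooth, compactly supported, with support inside `Ω`. -/
def IsTest (Ω : Set (En n)) (η : En n → ℝ) : Prop :=
  ContDiff ℝ (⊤ : ℕ∞) η ∧ HasCompactSupport η ∧ tsupport η ⊆ Ω

/-- `g` is the weak partial derivative of `f` in direction `v`, on `Ω`. -/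
def HasWeakPartialOn (Ω : Set (En n)) (f g : En n → ℝ) (v : En n) : Prop :=
  ∀ η : En n → ℝ, IsTest Ω η →
    ∫ x, f x * fderiv ℝ η x v = - ∫ x, g x * η x

/-- `g` is the weak gradient of `f` on `Ω`. -/
def HasWeakGradientOn (Ω : Set (En n)) (f : En n → ℝ) (g : En n → En n) : Prop :=
  ∀ i : Fin n, HasWeakPartialOn Ω f (fun x => g x i) (EuclideanSpace.single i 1)

/-- `f ∈ W^{1,p}(ℝⁿ)` with weak gradient `g`. -/
def MemW1p (p : ℝ) (f : En n → ℝ) (g : En n → En n) : Prop :=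
  AEStronglyMeasurable f volume ∧ AEStronglyMeasurable g volume ∧
  HasWeakGradientOn Set.univ f g ∧
  Integrable (fun x => |f x| ^ p) ∧ Integrable (fun x => ‖g x‖ ^ p)

/-- `f ∈ W^{1,p}_loc(Ω)` with weak gradient `g`. -/
def MemW1pLoc (p : ℝ) (Ω : Set (En n)) (f : En n → ℝ) (g : En n → En n) : Prop :=
  AEStronglyMeasurable f volume ∧ AEStronglyMeasurable g volume ∧
  HasWeakGradientOn Ω f g ∧
  ∀ K : Set (En n), K ⊆ Ω → IsCompact K →
    IntegrableOn (fun x => |f x| ^ p) K ∧ IntegrableOn (fun x => ‖g x‖ ^ p) K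

/-- `f ∈ W^{2,p}_loc(Ω)` with weak gradient `g` and weak second derivatives `h`. -/
def MemW2pLoc (p : ℝ) (Ω : Set (En n)) (f : En n → ℝ)
    (g : En n → En n) (h : En n → Fin n → En n) : Prop :=
  AEStronglyMeasurable f volume ∧ AEStronglyMeasurable g volume ∧
  HasWeakGradientOn Ω f g ∧
  (∀ i : Fin n, HasWeakGradientOn Ω (fun x => g x i) (fun x => h x i)) ∧
  ∀ K : Set (En n), K ⊆ Ω → IsCompact K →
    IntegrableOn (fun x => |f x| ^ p) K ∧ IntegrableOn (fun x => ‖g x‖ ^ p) K ∧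
    ∀ i : Fin n, IntegrableOn (fun x => ‖h x i‖ ^ p) K

/-- `f ∈ W^{2,p}(ℝⁿ)` with weak gradient `g` and weak second derivatives `h`. -/
def MemW2p (p : ℝ) (f : En n → ℝ) (g : En n → En n) (h : En n → Fin n → En n) : Prop :=
  AEStronglyMeasurable f volume ∧ AEStronglyMeasurable g volume ∧
  HasWeakGradientOn Set.univ f g ∧
  (∀ i : Fin n, HasWeakGradientOn Set.univ (fun x => g x i) (fun x => h x i)) ∧
  Integrable (fun x => |f x| ^ p) ∧ Integrable (fun x => ‖g x‖ ^ p) ∧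
  ∀ i : Fin n, Integrable (fun x => ‖h x i‖ ^ p)

/-- The `p`-capacity of a compact set. -/
def capK (p : ℝ) (F : Set (En n)) : ℝ≥0∞ :=
  ⨅ (g : En n → ℝ) (_ : ContDiff ℝ (⊤ : ℕ∞) g ∧ HasCompactSupport g ∧ ∀ x ∈ F, 1 ≤ g x),
    ∫⁻ x, (‖fderiv ℝ g x‖₊ : ℝ≥0∞) ^ p

/-- The `p`-capacity of an open set, by inner regularity over compact subsets. -/
def capOpen (p : ℝ) (U : Set (En n)) : ℝ≥0∞ :=
  ⨆ (F : Set (En n)) (_ : F ⊆ U ∧ IsCompact F), capK p F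

/-- The `p`-capacity of an arbitrary set, by outer regularity over open supersets. -/
def cap (p : ℝ) (E : Set (En n)) : ℝ≥0∞ :=
  ⨅ (U : Set (En n)) (_ : E ⊆ U ∧ IsOpen U), capOpen p U

/-- `f` restricted to `s` is Lipschitz outside a subset of `s` of `p`-capacity zero. -/
def LipschitzOnQE (p : ℝ) (f : En n → ℝ) (s : Set (En n)) : Prop :=
  ∃ N : Set (En n), N ⊆ s ∧ cap p N = 0 ∧ ∃ K : ℝ≥0, LipschitzOnWith K f (s \ N)

/-- The multiplicity function: the number of preimages of `y` in `A` under `φ`. -/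
def Nphi (φ : En n → En n) (A : Set (En n)) (y : En n) : ℝ≥0∞ :=
  Measure.count {x ∈ A | φ x = y}

end


section
open MeasureTheory Metric Filter Set
open scoped ENNReal Topology NNReal

theorem aux_jensen {α : Type*} [MeasurableSpace α] {μ : Measure α} {w f : α → ℝ≥0∞} {p : ℝ}
    (hp : 1 ≤ p) (hw : Measurable w) (hw1 : ∫⁻ x, w x ∂μ = 1) (hf : AEMeasurable f μ) :
    (∫⁻ x, w x * f x ∂μ) ^ p ≤ ∫⁻ x, w x * f x ^ p ∂μ := by
  have hP : IsProbabilityMeasure (μ.withDensity w) := ⟨by simp [withDensity_apply, hw1]⟩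
  have hac : μ.withDensity w ≪ μ := withDensity_absolutelyContinuous _ _
  have h := eLpNorm'_le_eLpNorm'_of_exponent_le (f := f) one_pos hp (μ.withDensity w)
    (hf.mono_ac hac).aestronglyMeasurable
  simp only [eLpNorm'_eq_lintegral_enorm, enorm_eq_self, ENNReal.rpow_one, div_one] at h
  rw [lintegral_withDensity_eq_lintegral_mul₀ hw.aemeasurable hf,
    lintegral_withDensity_eq_lintegral_mul₀ hw.aemeasurable (hf.pow_const p)] at h
  have := ENNReal.rpow_le_rpow h (by linarith : 0 ≤ p)
  rwa [← ENNReal.rpow_mul, one_div, inv_mul_cancel₀ (by linarith), ENNReal.rpow_one] at this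

theorem aux_jensen_avg {α : Type*} [MeasurableSpace α] {μ : Measure α} {f : α → ℝ≥0∞} {p : ℝ}
    (hp : 1 ≤ p) {s : Set α} (h0 : μ s ≠ 0) (h1 : μ s ≠ ∞) (hf : AEMeasurable f (μ.restrict s)) :
    ((μ s)⁻¹ * ∫⁻ x in s, f x ∂μ) ^ p ≤ (μ s)⁻¹ * ∫⁻ x in s, f x ^ p ∂μ := by
  have h := aux_jensen (μ := μ.restrict s) (w := fun _ => (μ s)⁻¹) hp measurable_const
    (by simp [ENNReal.inv_mul_cancel h0 h1]) hf
  rw [lintegral_const_mul'' _ hf, lintegral_const_mul'' _ (hf.pow_const p)] at h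
  exact h

/-- Lipschitz maps enlarge volume by at most `K^n`. -/
theorem aux_lip_vol {n : ℕ} {K : ℝ≥0} {f : En n → En n} {s : Set (En n)}
    (h : LipschitzOnWith K f s) : volume (f '' s) ≤ (K : ℝ≥0∞) ^ n * volume s := by
  have e : (μHE[n] : Measure (En n)) = volume := by
    have := EuclideanSpace.euclideanHausdorffMeasure_eq_volume n
    simpa using this
  have := h.hausdorffMeasure_image_le (d := n) (by positivity)
  rw [← e, Measure.euclideanHausdorffMeasure_def]
  simp only [Measure.smul_apply, ENNReal.smul_def, smul_eq_mul]
  calc _ ≤ _ := mul_le_mul_right this _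
    _ = _ := by rw [ENNReal.rpow_natCast]; ring

open scoped Classical in
/-- Folding of space into the ball `closedBall c r`. -/
noncomputable def foldB {n : ℕ} (c : En n) (r : ℝ) (x : En n) : En n :=
  if dist x c ≤ r then x else EuclideanGeometry.inversion c r x

theorem foldB_mem {n : ℕ} {c : En n} {r : ℝ} (hr : 0 < r) (x : En n) :
    foldB c r x ∈ closedBall c r := by
  unfold foldB
  split_ifs with h
  · exact h
  · push Not at h
    rw [mem_closedBall, EuclideanGeometry.dist_inversion_center, div_le_iff₀ (by linarith)]
    nlinarith

theorem foldB_lip_mixed {n : ℕ} {c : En n} {r : ℝ} (hr : 0 < r) {x y : En n}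
    (hx : dist x c ≤ r) (hy : r < dist y c) :
    dist (EuclideanGeometry.inversion c r y) x ≤ dist y x := by
  rw [EuclideanGeometry.inversion_def, dist_eq_norm, dist_eq_norm]
  set a := y - c
  set b := x - c
  have ha : r < ‖a‖ := by rwa [dist_eq_norm] at hy
  have hb : ‖b‖ ≤ r := by rwa [dist_eq_norm] at hx
  have e1 : ((r / dist y c) ^ 2 • (y -ᵥ c) +ᵥ c) - x = (r / ‖a‖) ^ 2 • a - b := by
    simp only [a, b, dist_eq_norm, vsub_eq_sub, vadd_eq_add]; abel
  have e2 : y - x = a - b := by simp [a, b]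
  beta_reduce
  rw [e1, e2]
  clear e1 e2
  clear_value a b
  have h0 : 0 < ‖a‖ := hr.trans ha
  set s := (r / ‖a‖) ^ 2 with hs
  have hs1 : s ≤ 1 := by
    rw [hs]; apply pow_le_one₀ (by positivity); rw [div_le_one h0]; exact ha.le
  have hs2 : s * ‖a‖ ^ 2 = r ^ 2 := by rw [hs]; field_simp
  have hi : inner ℝ a b ≤ ‖a‖ * r :=
    (real_inner_le_norm a b).trans (mul_le_mul_of_nonneg_left hb h0.le)
  apply le_of_sq_le_sq _ (norm_nonneg _)
  rw [@norm_sub_sq_real, @norm_sub_sq_real, norm_smul, real_inner_smul_left, mul_pow]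
  have : ‖s‖ ^ 2 = s ^ 2 := by simp
  rw [this]
  have : 0 ≤ (1 - s) * ((1 + s) * ‖a‖ ^ 2 - 2 * inner ℝ a b) := by
    apply mul_nonneg (by linarith)
    nlinarith [sq_nonneg (‖a‖ - r)]
  nlinarith

theorem foldB_lipschitz {n : ℕ} {c : En n} {r : ℝ} (hr : 0 < r) :
    LipschitzWith 1 (foldB c r) := by
  apply LipschitzWith.of_dist_le_mul
  intro x y
  simp only [NNReal.coe_one, one_mul]
  unfold foldB
  split_ifs with h1 h2 h2
  · exact le_rfl
  · push Not at h2
    rw [dist_comm, dist_comm x]; exact foldB_lip_mixed hr h1 h2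
  · push Not at h1
    exact foldB_lip_mixed hr h2 h1
  · push Not at h1 h2
    have hx : x ≠ c := by rintro rfl; simp at h1; linarith
    have hy : y ≠ c := by rintro rfl; simp at h2; linarith
    rw [EuclideanGeometry.dist_inversion_inversion hx hy]
    apply mul_le_of_le_one_left dist_nonneg
    rw [div_le_one (by nlinarith)]
    nlinarith

theorem foldB_lintegral {n : ℕ} {c : En n} {r : ℝ} (hr : 0 < r) {Ψ : En n → ℝ≥0∞}
    (hΨ : Measurable Ψ) :
    ∫⁻ x in closedBall c (2 * r), Ψ (foldB c r x) ≤
      (1 + 4 ^ n) * ∫⁻ x in closedBall c r, Ψ x := by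
  have hm : Measurable (foldB c r) := (foldB_lipschitz hr).continuous.measurable
  rw [← lintegral_map hΨ hm, ← smul_eq_mul (1 + 4 ^ n : ℝ≥0∞),
    ← lintegral_smul_measure]
  apply lintegral_mono' _ le_rfl
  rw [Measure.le_iff]
  intro A hA
  rw [Measure.map_apply hm hA, Measure.restrict_apply (hm hA)]
  simp only [Measure.smul_apply, smul_eq_mul]
  rw [Measure.restrict_apply hA]
  set T := A ∩ closedBall c r
  set T' := T ∩ {x | r / 2 ≤ dist x c}
  have hsub : foldB c r ⁻¹' A ∩ closedBall c (2 * r) ⊆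
      T ∪ EuclideanGeometry.inversion c r '' T' := by
    rintro x ⟨hx1, hx2⟩
    have hmem := foldB_mem hr (c := c) x
    by_cases h : dist x c ≤ r
    · left
      have : foldB c r x = x := by simp [foldB, h]
      rw [mem_preimage, this] at hx1
      exact ⟨hx1, h⟩
    · right
      have e : foldB c r x = EuclideanGeometry.inversion c r x := by simp [foldB, h]
      push Not at h
      refine ⟨EuclideanGeometry.inversion c r x, ⟨⟨?_, ?_⟩, ?_⟩,
        EuclideanGeometry.inversion_inversion c hr.ne' x⟩
      · rw [← e]; exact hx1
      · rw [← e]; exact hmem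
      · simp only [mem_ofPred_eq]
        rw [EuclideanGeometry.dist_inversion_center, le_div_iff₀ (by linarith)]
        rw [mem_closedBall] at hx2
        nlinarith
  have hlip : LipschitzOnWith 4 (EuclideanGeometry.inversion c r) T' := by
    apply LipschitzOnWith.of_dist_le_mul
    rintro x ⟨-, hx⟩ y ⟨-, hy⟩
    simp only [mem_ofPred_eq] at hx hy
    have hx' : x ≠ c := by rintro rfl; simp at hx; linarith
    have hy' : y ≠ c := by rintro rfl; simp at hy; linarith
    rw [EuclideanGeometry.dist_inversion_inversion hx' hy']
    apply mul_le_mul_of_nonneg_right _ dist_nonneg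
    rw [div_le_iff₀ (by nlinarith)]
    have : r / 2 * (r / 2) ≤ dist x c * dist y c := by gcongr
    push_cast
    nlinarith
  calc _ ≤ volume (T ∪ EuclideanGeometry.inversion c r '' T') := measure_mono hsub
    _ ≤ volume T + volume (EuclideanGeometry.inversion c r '' T') := measure_union_le _ _
    _ ≤ volume T + 4 ^ n * volume T := by
      gcongr
      refine (aux_lip_vol hlip).trans ?_
      push_cast
      gcongr
      exact inter_subset_left
    _ = _ := by ring

end

section
open MeasureTheory Metric Filter Set
open scoped ENNReal Topology NNReal

theorem aux_ftc {n : ℕ} {F : Type*} [NormedAddCommGroup F] [NormedSpace ℝ F] [CompleteSpace F]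
    {G : En n → F} (hG : ContDiff ℝ 1 G) (a b : En n) :
    ‖G b - G a‖ₑ ≤ ‖b - a‖ₑ * ∫⁻ t in Ioc (0:ℝ) 1, ‖fderiv ℝ G (a + t • (b - a))‖ₑ := by
  have hd : ∀ t : ℝ, HasDerivAt (fun t : ℝ => G (a + t • (b - a)))
      (fderiv ℝ G (a + t • (b - a)) (b - a)) t := by
    intro t
    have h1 : HasDerivAt (fun t : ℝ => a + t • (b - a)) (b - a) t := by
      simpa using ((hasDerivAt_id t).smul_const (b - a)).const_add a
    exact ((hG.differentiable one_ne_zero _).hasFDerivAt).comp_hasDerivAt t h1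
  have hc0 : Continuous fun t : ℝ => fderiv ℝ G (a + t • (b - a)) :=
    (hG.continuous_fderiv one_ne_zero).comp (by fun_prop)
  have hc : Continuous fun t : ℝ => fderiv ℝ G (a + t • (b - a)) (b - a) :=
    hc0.clm_apply continuous_const
  have h := intervalIntegral.integral_eq_sub_of_hasDerivAt (a := 0) (b := 1)
    (fun t _ => hd t) (hc.intervalIntegrable _ _)
  simp only [one_smul, zero_smul, add_zero, add_sub_cancel] at h
  rw [← h, intervalIntegral.integral_of_le zero_le_one]
  refine (enorm_integral_le_lintegral_enorm _).trans ?_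
  rw [mul_comm, ← lintegral_mul_const _ hc0.enorm.measurable]
  exact lintegral_mono fun t => ContinuousLinearMap.le_opENorm _ _

theorem aux_push {n : ℕ} {K : ℝ≥0} {T T' : En n → En n} (hT : Measurable T)
    (hT' : LipschitzWith K T') {S B : Set (En n)} (hS : MeasurableSet S)
    (hinv : ∀ y ∈ S, T' (T y) = y) (hmaps : ∀ y ∈ S, T y ∈ B) {Φ : En n → ℝ≥0∞}
    (hΦ : Measurable Φ) :
    ∫⁻ y in S, Φ (T y) ≤ (K : ℝ≥0∞) ^ n * ∫⁻ x in B, Φ x := by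
  rw [← lintegral_map hΦ hT, ← smul_eq_mul, ← lintegral_smul_measure]
  apply lintegral_mono' _ le_rfl
  rw [Measure.le_iff]
  intro A hA
  rw [Measure.map_apply hT hA, Measure.restrict_apply (hT hA)]
  simp only [Measure.smul_apply, smul_eq_mul]
  rw [Measure.restrict_apply hA]
  refine le_trans (measure_mono ?_) (aux_lip_vol (hT'.lipschitzOnWith (s := A ∩ B)))
  rintro y ⟨h1, h2⟩
  exact ⟨T y, ⟨h1, hmaps y h2⟩, hinv y h2⟩

theorem aux_homothety {n : ℕ} {B : Set (En n)} (hB : Convex ℝ B) (hBm : MeasurableSet B)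
    {x : En n} (hx : x ∈ B) {s : ℝ} (hs : 1 / 2 ≤ s) (hs1 : s ≤ 1) {Φ : En n → ℝ≥0∞}
    (hΦ : Measurable Φ) :
    ∫⁻ y in B, Φ (x + s • (y - x)) ≤ 2 ^ n * ∫⁻ y in B, Φ y := by
  have h := aux_push (K := 2) (T := fun y => x + s • (y - x)) (T' := fun z => x + s⁻¹ • (z - x))
    (by fun_prop) ?_ hBm (B := B) ?_ ?_ hΦ
  · simpa using h
  · apply LipschitzWith.of_dist_le_mul
    intro u v
    rw [dist_eq_norm, dist_eq_norm]
    have : x + s⁻¹ • (u - x) - (x + s⁻¹ • (v - x)) = s⁻¹ • (u - v) := by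
      simp only [smul_sub]; abel
    rw [this, norm_smul, Real.norm_eq_abs, abs_of_nonneg (by positivity)]
    gcongr
    rw [inv_le_comm₀ (by linarith) (by norm_num)]
    simpa using hs
  · intro y _
    have : s ≠ 0 := by linarith
    simp [smul_smul, this]
  · intro y hy
    have := hB hx hy (a := 1 - s) (b := s) (by linarith) (by linarith) (by ring)
    convert this using 1
    simp only [smul_sub, sub_smul, one_smul]; abel

theorem aux_double {n : ℕ} {B : Set (En n)} (hB : Convex ℝ B) (hBm : MeasurableSet B)
    {t : ℝ} (ht : 0 ≤ t) (ht1 : t ≤ 1) {Φ : En n → ℝ≥0∞} (hΦ : Measurable Φ) :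
    ∫⁻ x in B, ∫⁻ y in B, Φ (x + t • (y - x)) ≤ 2 ^ n * volume B * ∫⁻ y in B, Φ y := by
  have key : ∀ s : ℝ, 1 / 2 ≤ s → s ≤ 1 →
      ∫⁻ x in B, ∫⁻ y in B, Φ (x + s • (y - x)) ≤ 2 ^ n * volume B * ∫⁻ y in B, Φ y := by
    intro s hs hs1
    calc _ ≤ ∫⁻ x in B, 2 ^ n * ∫⁻ y in B, Φ y :=
          setLIntegral_mono' hBm fun x hx => aux_homothety hB hBm hx hs hs1 hΦ
      _ = _ := by rw [setLIntegral_const]; ring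
  by_cases h : 1 / 2 ≤ t
  · exact key t h ht1
  · rw [lintegral_lintegral_swap]
    · have e : ∀ x y : En n, y + t • (x - y) = x + (1 - t) • (y - x) := by
        intro x y; simp only [smul_sub, sub_smul, one_smul]; abel
      simp only [e]
      exact key (1 - t) (by linarith) (by linarith)
    · apply Measurable.aemeasurable
      exact hΦ.comp (by fun_prop)

theorem aux_triple {n : ℕ} {B : Set (En n)} (hBc : Convex ℝ B) (hBm : MeasurableSet B)
    {Φ : En n → ℝ≥0∞} (hΦ : Measurable Φ) (C : ℝ≥0∞) :
    ∫⁻ x in B, C * ∫⁻ y in B, ∫⁻ t in Ioc (0:ℝ) 1, Φ (x + t • (y - x)) ≤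
      C * (2 ^ n * volume B * ∫⁻ y in B, Φ y) := by
  have hmeas3 : Measurable fun q : (En n × En n) × ℝ => Φ (q.1.1 + q.2 • (q.1.2 - q.1.1)) :=
    hΦ.comp (by fun_prop)
  have hmeas2 : Measurable fun q : En n × En n =>
      ∫⁻ t in Ioc (0:ℝ) 1, Φ (q.1 + t • (q.2 - q.1)) := hmeas3.lintegral_prod_right'
  have hmeas1 : Measurable fun x : En n => ∫⁻ y in B,
      ∫⁻ t in Ioc (0:ℝ) 1, Φ (x + t • (y - x)) := hmeas2.lintegral_prod_right'
  have hmeas3' : Measurable fun q : (En n × ℝ) × En n => Φ (q.1.1 + q.1.2 • (q.2 - q.1.1)) :=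
    hΦ.comp (by fun_prop)
  have hmeas2' : Measurable fun q : En n × ℝ =>
      ∫⁻ y in B, Φ (q.1 + q.2 • (y - q.1)) := hmeas3'.lintegral_prod_right'
  rw [lintegral_const_mul _ hmeas1]
  gcongr 1
  have e1 : ∀ x : En n, ∫⁻ y in B, ∫⁻ t in Ioc (0:ℝ) 1, Φ (x + t • (y - x)) =
      ∫⁻ t in Ioc (0:ℝ) 1, ∫⁻ y in B, Φ (x + t • (y - x)) := by
    intro x
    refine lintegral_lintegral_swap (f := fun y t => Φ (x + t • (y - x))) ?_
    apply Measurable.aemeasurable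
    exact hΦ.comp (by fun_prop)
  simp only [e1]
  rw [lintegral_lintegral_swap (f := fun x t => ∫⁻ y in B, Φ (x + t • (y - x)))
    hmeas2'.aemeasurable]
  calc _ ≤ ∫⁻ t in Ioc (0:ℝ) 1, 2 ^ n * volume B * ∫⁻ y in B, Φ y :=
        setLIntegral_mono' measurableSet_Ioc fun t ht =>
          aux_double hBc hBm ht.1.le ht.2 hΦ
    _ = _ := by
        rw [setLIntegral_const]; simp

theorem aux_pt {n : ℕ} {F : Type*} [NormedAddCommGroup F] [NormedSpace ℝ F] [CompleteSpace F]
    {G : En n → F} (hG : ContDiff ℝ 1 G) {p : ℝ} (hp : 1 ≤ p) {x y : En n} {R : ℝ≥0∞}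
    (hyx : ‖y - x‖ₑ ≤ R) :
    ‖G y - G x‖ₑ ^ p ≤ R ^ p * ∫⁻ t in Ioc (0:ℝ) 1, ‖fderiv ℝ G (x + t • (y - x))‖ₑ ^ p := by
  have hp0 : 0 ≤ p := by linarith
  have hcd : Continuous (fderiv ℝ G) := hG.continuous_fderiv one_ne_zero
  calc _ ≤ (R * ∫⁻ t in Ioc (0:ℝ) 1, ‖fderiv ℝ G (x + t • (y - x))‖ₑ) ^ p := by
        gcongr
        exact (aux_ftc hG x y).trans (by gcongr)
    _ = R ^ p * (∫⁻ t in Ioc (0:ℝ) 1, ‖fderiv ℝ G (x + t • (y - x))‖ₑ) ^ p :=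
        ENNReal.mul_rpow_of_nonneg _ _ hp0
    _ ≤ _ := by
        gcongr 1
        have hm : Continuous fun t : ℝ => fderiv ℝ G (x + t • (y - x)) :=
          hcd.comp (by fun_prop)
        simpa using aux_jensen_avg (μ := volume) hp (s := Ioc (0:ℝ) 1) (by simp) (by simp)
          hm.enorm.measurable.aemeasurable

theorem aux_lower {n : ℕ} {F : Type*} [NormedAddCommGroup F] [NormedSpace ℝ F]
    {G : En n → F} {B : Set (En n)} (hB0 : volume B ≠ 0) (hB1 : volume B ≠ ∞)
    {l : ℝ} (hl : ENNReal.ofReal l * volume B ≤ ∫⁻ x in B, ‖G x‖ₑ) (x : En n) :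
    ENNReal.ofReal (l - ‖G x‖) ≤ (volume B)⁻¹ * ∫⁻ y in B, ‖G y - G x‖ₑ := by
  rw [ENNReal.ofReal_sub _ (norm_nonneg _), tsub_le_iff_right, ofReal_norm]
  have : ENNReal.ofReal l ≤ (volume B)⁻¹ * ∫⁻ y in B, ‖G y‖ₑ := by
    rw [← ENNReal.div_eq_inv_mul, ENNReal.le_div_iff_mul_le (Or.inl hB0) (Or.inl hB1)]
    exact hl
  refine this.trans ?_
  calc _ ≤ (volume B)⁻¹ * ∫⁻ y in B, (‖G y - G x‖ₑ + ‖G x‖ₑ) := by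
        gcongr with y
        calc ‖G y‖ₑ = ‖(G y - G x) + G x‖ₑ := by simp
          _ ≤ _ := enorm_add_le _ _
    _ = _ := by
        rw [lintegral_add_right _ measurable_const, setLIntegral_const, mul_add]
        congr 1
        rw [mul_comm, mul_assoc, ENNReal.mul_inv_cancel hB0 hB1, mul_one]

theorem aux_segmeas {n : ℕ} {Φ : En n → ℝ≥0∞} (hΦ : Measurable Φ) (x : En n) :
    Measurable fun y : En n => ∫⁻ t in Ioc (0:ℝ) 1, Φ (x + t • (y - x)) := by
  have hmeas3 : Measurable fun q : En n × ℝ => Φ (x + q.2 • (q.1 - x)) :=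
    hΦ.comp (by fun_prop)
  exact hmeas3.lintegral_prod_right'

theorem aux_poincare {n : ℕ} {F : Type*} [NormedAddCommGroup F] [NormedSpace ℝ F] [CompleteSpace F]
    {G : En n → F} (hG : ContDiff ℝ 1 G) {p : ℝ} (hp : 1 ≤ p) {c : En n} {r : ℝ} (hr : 0 < r)
    {l : ℝ} (hl : ENNReal.ofReal l * volume (closedBall c r) ≤ ∫⁻ x in closedBall c r, ‖G x‖ₑ) :
    ∫⁻ x in closedBall c r, ENNReal.ofReal (l - ‖G x‖) ^ p ≤
      2 ^ n * ENNReal.ofReal (2 * r) ^ p * ∫⁻ x in closedBall c r, ‖fderiv ℝ G x‖ₑ ^ p := by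
  set B := closedBall c r with hBdef
  have hBm : MeasurableSet B := measurableSet_closedBall
  have hBc : Convex ℝ B := convex_closedBall c r
  have hB0 : volume B ≠ 0 := (measure_closedBall_pos _ _ hr).ne'
  have hB1 : volume B ≠ ∞ := measure_closedBall_lt_top.ne
  have hp0 : 0 ≤ p := by linarith
  have hΦ : Measurable fun x => ‖fderiv ℝ G x‖ₑ ^ p :=
    (hG.continuous_fderiv one_ne_zero).enorm.measurable.pow_const p
  have hGm : Continuous G := hG.continuous
  have h1 : ∀ x ∈ B, ENNReal.ofReal (l - ‖G x‖) ^ p ≤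
      ((volume B)⁻¹ * ENNReal.ofReal (2 * r) ^ p) * ∫⁻ y in B,
        ∫⁻ t in Ioc (0:ℝ) 1, ‖fderiv ℝ G (x + t • (y - x))‖ₑ ^ p := by
    intro x hx
    have hm : Measurable fun y => ∫⁻ t in Ioc (0:ℝ) 1, ‖fderiv ℝ G (x + t • (y - x))‖ₑ ^ p :=
      aux_segmeas hΦ x
    calc _ ≤ ((volume B)⁻¹ * ∫⁻ y in B, ‖G y - G x‖ₑ) ^ p :=
          ENNReal.rpow_le_rpow (aux_lower hB0 hB1 hl x) hp0
      _ ≤ (volume B)⁻¹ * ∫⁻ y in B, ‖G y - G x‖ₑ ^ p :=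
          aux_jensen_avg hp hB0 hB1 (Continuous.enorm (by fun_prop)).measurable.aemeasurable
      _ ≤ _ := by
          rw [mul_assoc, ← lintegral_const_mul _ hm]
          gcongr 1
          refine setLIntegral_mono' hBm fun y hy => aux_pt hG hp ?_
          rw [← ofReal_norm]
          apply ENNReal.ofReal_le_ofReal
          rw [← dist_eq_norm]
          have := dist_triangle_right y x c
          rw [hBdef, mem_closedBall] at hx hy
          linarith
  refine (setLIntegral_mono' hBm h1).trans ((aux_triple hBc hBm hΦ _).trans (le_of_eq ?_))
  calc _ = ((volume B)⁻¹ * volume B) * (2 ^ n * ENNReal.ofReal (2 * r) ^ p *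
            ∫⁻ y in B, ‖fderiv ℝ G y‖ₑ ^ p) := by ring
    _ = _ := by rw [ENNReal.inv_mul_cancel hB0 hB1, one_mul]

end

section
open MeasureTheory Metric Filter Set
open scoped ENNReal Topology NNReal

theorem aux_moll_int {n : ℕ} {w Ψ : En n → ℝ≥0∞} {p : ℝ} (hp : 1 ≤ p)
    (hw : Measurable w) (hw1 : ∫⁻ x, w x = 1) (hΨ : AEMeasurable Ψ volume) :
    ∫⁻ x, (∫⁻ t, w t * Ψ (x - t)) ^ p ≤ ∫⁻ x, Ψ x ^ p := by
  set Ψ' := hΨ.mk Ψ with hΨ'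
  have hm : Measurable Ψ' := hΨ.measurable_mk
  have e1 : ∀ x, ∫⁻ t, w t * Ψ (x - t) = ∫⁻ t, w t * Ψ' (x - t) := by
    intro x
    apply lintegral_congr_ae
    have := (Measure.measurePreserving_sub_left (volume : Measure (En n)) x).quasiMeasurePreserving.ae_eq
      hΨ.ae_eq_mk
    filter_upwards [this] with t ht
    simp only [Function.comp] at ht
    rw [ht]
  have e2 : ∫⁻ x, Ψ x ^ p = ∫⁻ x, Ψ' x ^ p := by
    apply lintegral_congr_ae
    filter_upwards [hΨ.ae_eq_mk] with x hx
    rw [hx]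
  rw [e2]
  simp only [e1]
  calc _ ≤ ∫⁻ x, ∫⁻ t, w t * Ψ' (x - t) ^ p := by
        refine lintegral_mono fun x => aux_jensen hp hw hw1 ?_
        exact (hm.comp (by fun_prop)).aemeasurable
    _ = ∫⁻ t, ∫⁻ x, w t * Ψ' (x - t) ^ p := by
        apply lintegral_lintegral_swap (f := fun x t => w t * Ψ' (x - t) ^ p)
        apply Measurable.aemeasurable
        exact (hw.comp measurable_snd).mul
          ((hm.comp (by fun_prop : Measurable fun q : En n × En n => q.1 - q.2)).pow_const p)
    _ = ∫⁻ t, w t * ∫⁻ x, Ψ' x ^ p := by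
        refine lintegral_congr fun t => ?_
        rw [lintegral_const_mul]
        · congr 1
          exact lintegral_sub_right_eq_self (fun x => Ψ' x ^ p) t
        · exact (hm.comp (by fun_prop)).pow_const p
    _ = _ := by rw [lintegral_mul_const _ hw, hw1, one_mul]

theorem aux_bump_enorm {n : ℕ} (φ : ContDiffBump (0 : En n)) :
    ∫⁻ x, ‖φ.normed volume x‖ₑ = 1 := by
  have h := φ.integral_normed (μ := (volume : Measure (En n)))
  rw [integral_eq_lintegral_of_nonneg_ae (Eventually.of_forall φ.nonneg_normed)
    φ.continuous_normed.aestronglyMeasurable] at h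
  have : ∫⁻ x, ‖φ.normed volume x‖ₑ = ∫⁻ x, ENNReal.ofReal (φ.normed volume x) := by
    refine lintegral_congr fun x => ?_
    rw [Real.enorm_eq_ofReal (φ.nonneg_normed x)]
  rw [this]
  have h2 : ∫⁻ x, ENNReal.ofReal (φ.normed (volume : Measure (En n)) x) ≠ ∞ := by
    intro h3; rw [h3] at h; simp at h
  rw [← ENNReal.ofReal_toReal h2, h, ENNReal.ofReal_one]

theorem aux_lip_moll {n : ℕ} {v : En n → ℝ} {K : ℝ≥0} (hv : LipschitzWith K v)
    (φ : ContDiffBump (0 : En n)) (x : En n) :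
    ‖fderiv ℝ (convolution (φ.normed volume) v (ContinuousLinearMap.lsmul ℝ ℝ) volume) x‖ₑ ≤
      ∫⁻ t, ‖φ.normed volume t‖ₑ * ‖fderiv ℝ v (x - t)‖ₑ := by
  have hφc : Continuous (φ.normed (volume : Measure (En n))) := φ.continuous_normed
  have hφi : Integrable (φ.normed (volume : Measure (En n))) :=
    hφc.integrable_of_hasCompactSupport φ.hasCompactSupport_normed
  have hd : ∀ᵐ t : En n, DifferentiableAt ℝ v (x - t) :=
    (Measure.measurePreserving_sub_left (volume : Measure (En n)) x).quasiMeasurePreserving.ae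
      hv.ae_differentiableAt
  have key := hasFDerivAt_integral_of_dominated_loc_of_lip (𝕜 := ℝ) (μ := (volume : Measure (En n)))
    (F := fun x t => φ.normed volume t • v (x - t)) (x₀ := x) (s := univ)
    (bound := fun t => φ.normed volume t * K)
    (F' := fun t => φ.normed volume t • fderiv ℝ v (x - t)) univ_mem ?_ ?_ ?_ ?_ ?_ ?_
  · have e : (convolution (φ.normed volume) v (ContinuousLinearMap.lsmul ℝ ℝ) volume) =
      fun x => ∫ t, φ.normed volume t • v (x - t) := rfl
    rw [e, key.2.fderiv]
    refine (enorm_integral_le_lintegral_enorm _).trans (le_of_eq ?_)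
    simp only [enorm_smul]
  · refine Eventually.of_forall fun y => Continuous.aestronglyMeasurable ?_
    exact hφc.smul (hv.continuous.comp (by fun_prop))
  · apply Continuous.integrable_of_hasCompactSupport
    · exact hφc.smul (hv.continuous.comp (by fun_prop))
    · exact φ.hasCompactSupport_normed.smul_right
  · apply AEStronglyMeasurable.smul hφc.aestronglyMeasurable
    apply Measurable.aestronglyMeasurable
    exact (measurable_fderiv ℝ v).comp (by fun_prop)
  · refine Eventually.of_forall fun t => ?_
    apply LipschitzOnWith.of_dist_le_mul
    intro y _ z _
    simp only [smul_eq_mul, Real.coe_nnabs]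
    rw [Real.dist_eq, ← mul_sub, abs_mul, abs_mul, mul_assoc]
    gcongr
    have := hv.dist_le_mul (y - t) (z - t)
    rw [Real.dist_eq] at this
    simpa using this
  · exact hφi.mul_const _
  · filter_upwards [hd] with t ht
    have := (ht.hasFDerivAt.comp x ((hasFDerivAt_id x).sub_const t)).const_smul (φ.normed volume t)
    rw [ContinuousLinearMap.comp_id] at this
    exact this

theorem aux_L1 {n : ℕ} {v : En n → ℝ} {K : ℝ≥0} (hv : LipschitzWith K v)
    (hvc : HasCompactSupport v) {F : Set (En n)} {l : ℝ} (hl : 0 < l) (hF : ∀ x ∈ F, l ≤ v x)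
    {p : ℝ} (hp : 1 ≤ p) :
    capK p F ≤ ENNReal.ofReal (2 / l) ^ p * ∫⁻ x, ‖fderiv ℝ v x‖ₑ ^ p := by
  have hp0 : 0 ≤ p := by linarith
  set δ : ℝ := l / (2 * (K + 1)) with hδ
  have hδ0 : 0 < δ := by positivity
  let φ : ContDiffBump (0 : En n) := ⟨δ / 2, δ, by positivity, by linarith⟩
  set w := convolution (φ.normed volume) v (ContinuousLinearMap.lsmul ℝ ℝ) volume with hw
  have hws : ContDiff ℝ (⊤ : ℕ∞) w :=
    φ.hasCompactSupport_normed.contDiff_convolution_left _ φ.contDiff_normed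
      hv.continuous.locallyIntegrable
  have hwc : HasCompactSupport w := φ.hasCompactSupport_normed.convolution _ hvc
  have hwv : ∀ x, dist (w x) (v x) ≤ l / 2 := by
    intro x
    apply ContDiffBump.dist_normed_convolution_le hv.continuous.aestronglyMeasurable
    intro y hy
    have h1 : dist y x < δ := hy
    refine (hv.dist_le_mul y x).trans ?_
    calc (K : ℝ) * dist y x ≤ (K + 1) * δ := by
          gcongr
          · linarith
      _ = l / 2 := by rw [hδ]; field_simp
  have hint : ∫⁻ x, ‖fderiv ℝ w x‖ₑ ^ p ≤ ∫⁻ x, ‖fderiv ℝ v x‖ₑ ^ p := by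
    calc _ ≤ ∫⁻ x, (∫⁻ t, ‖φ.normed volume t‖ₑ * ‖fderiv ℝ v (x - t)‖ₑ) ^ p := by
          gcongr with x
          exact aux_lip_moll hv φ x
      _ ≤ _ := aux_moll_int (w := fun t => ‖φ.normed volume t‖ₑ) (Ψ := fun x => ‖fderiv ℝ v x‖ₑ) hp
          φ.continuous_normed.enorm.measurable (aux_bump_enorm φ)
          (measurable_fderiv ℝ v).enorm.aemeasurable
  have hle : capK p F ≤ ∫⁻ x, (‖fderiv ℝ (fun x => (2 / l) • w x) x‖₊ : ℝ≥0∞) ^ p := by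
    unfold capK
    refine iInf₂_le (fun x => (2 / l) • w x) ⟨hws.const_smul _, hwc.smul_left (f := fun _ => 2 / l), ?_⟩
    intro x hx
    have h1 := hwv x
    have h2 := hF x hx
    rw [Real.dist_eq, abs_le] at h1
    show 1 ≤ (2 / l) • w x
    rw [smul_eq_mul, div_mul_eq_mul_div, le_div_iff₀ hl]
    linarith
  refine hle.trans ?_
  have e : ∀ x, (‖fderiv ℝ (fun x => (2 / l) • w x) x‖₊ : ℝ≥0∞) ^ p =
      ENNReal.ofReal (2 / l) ^ p * ‖fderiv ℝ w x‖ₑ ^ p := by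
    intro x
    rw [fderiv_fun_const_smul (hws.differentiable (by simp) x)]
    rw [← ENNReal.mul_rpow_of_nonneg _ _ hp0, ← enorm_eq_nnnorm, enorm_smul,
      Real.enorm_eq_ofReal (by positivity)]
  simp only [e]
  rw [lintegral_const_mul _ ((measurable_fderiv ℝ w).enorm.pow_const p)]
  gcongr

end

section
open MeasureTheory Metric Filter Set
open scoped ENNReal Topology NNReal

def SlopeLE {n : ℕ} (h : En n → ℝ) (x : En n) (a : ℝ) : Prop :=
  ∀ b > a, ∀ᶠ y in 𝓝 x, |h y - h x| ≤ b * ‖y - x‖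

theorem SlopeLE.fderiv_le {n : ℕ} {h : En n → ℝ} {x : En n} {a : ℝ} (H : SlopeLE h x a)
    (ha : 0 ≤ a) : ‖fderiv ℝ h x‖ ≤ a := by
  by_cases hd : DifferentiableAt ℝ h x
  · refine le_of_forall_gt_imp_ge_of_dense fun b hb => ?_
    exact hd.hasFDerivAt.le_of_lip' (by linarith) (H b hb)
  · rw [fderiv_zero_of_not_differentiableAt hd]; simpa using ha

theorem SlopeLE.add {n : ℕ} {f g : En n → ℝ} {x : En n} {a b : ℝ} (hf : SlopeLE f x a)
    (hg : SlopeLE g x b) : SlopeLE (fun y => f y + g y) x (a + b) := by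
  intro c hc
  filter_upwards [hf (a + (c - a - b) / 2) (by linarith), hg (b + (c - a - b) / 2) (by linarith)]
    with y h1 h2
  calc |f y + g y - (f x + g x)| = |(f y - f x) + (g y - g x)| := by congr 1; ring
    _ ≤ |f y - f x| + |g y - g x| := abs_add_le _ _
    _ ≤ _ := by linarith [h1, h2]

theorem SlopeLE.max {n : ℕ} {f g : En n → ℝ} {x : En n} {a b : ℝ} (hf : SlopeLE f x a)
    (hg : SlopeLE g x b) : SlopeLE (fun y => max (f y) (g y)) x (max a b) := by
  intro c hc
  filter_upwards [hf c (lt_of_le_of_lt (le_max_left _ _) hc),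
    hg c (lt_of_le_of_lt (le_max_right _ _) hc)] with y h1 h2
  exact (abs_max_sub_max_le_max _ _ _ _).trans (max_le h1 h2)

theorem slope_norm_comp {n : ℕ} {F : Type*} [NormedAddCommGroup F] [NormedSpace ℝ F]
    {G : En n → F} (hG : ContDiff ℝ 1 G) {T : En n → En n} (hT : LipschitzWith 1 T) (x : En n) :
    SlopeLE (fun y => ‖G (T y)‖) x ‖fderiv ℝ G (T x)‖ := by
  intro b hb
  have hb0 : 0 ≤ b := (norm_nonneg _).trans hb.le
  have hs : HasStrictFDerivAt G (fderiv ℝ G (T x)) (T x) :=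
    (hG.contDiffAt).hasStrictFDerivAt one_ne_zero
  obtain ⟨s, hs1, hs2⟩ := hs.exists_lipschitzOnWith_of_nnnorm_lt ⟨b, hb0⟩ hb
  filter_upwards [hT.continuous.continuousAt hs1] with y hy
  refine (abs_norm_sub_norm_le _ _).trans ?_
  have h1 := hs2.dist_le_mul (T y) hy (T x) (mem_of_mem_nhds hs1)
  have h2 := hT.dist_le_mul y x
  rw [dist_eq_norm] at h1
  simp only [NNReal.coe_one, one_mul, dist_eq_norm y x] at h2
  refine h1.trans ?_
  exact mul_le_mul_of_nonneg_left h2 hb0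

theorem slope_mul {n : ℕ} {χ m : En n → ℝ} {x : En n} {a k : ℝ} (h0 : ∀ y, 0 ≤ χ y)
    (h1 : ∀ y, χ y ≤ 1) (hk : ∀ y, |χ y - χ x| ≤ k * ‖y - x‖) (hm0 : 0 ≤ m x)
    (hm : SlopeLE m x a) : SlopeLE (fun y => χ y * m y) x (a + k * m x) := by
  intro b hb
  filter_upwards [hm (b - k * m x) (by linarith)] with y hy
  calc |χ y * m y - χ x * m x| = |χ y * (m y - m x) + (χ y - χ x) * m x| := by congr 1; ring
    _ ≤ χ y * |m y - m x| + |χ y - χ x| * m x := by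
        refine (abs_add_le _ _).trans (le_of_eq ?_)
        rw [abs_mul, abs_mul, abs_of_nonneg (h0 y), abs_of_nonneg hm0]
    _ ≤ 1 * |m y - m x| + (k * ‖y - x‖) * m x := by
        gcongr
        · exact h1 y
        · exact hk y
    _ ≤ _ := by nlinarith

noncomputable def chiB {n : ℕ} (c : En n) (r : ℝ) (x : En n) : ℝ := max 0 (min 1 (2 - dist x c / r))

theorem chiB_nonneg {n : ℕ} (c : En n) (r : ℝ) (x : En n) : 0 ≤ chiB c r x := le_max_left _ _
theorem chiB_le_one {n : ℕ} (c : En n) (r : ℝ) (x : En n) : chiB c r x ≤ 1 :=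
  max_le zero_le_one (min_le_left _ _)
theorem chiB_eq_one {n : ℕ} {c : En n} {r : ℝ} (hr : 0 < r) {x : En n} (hx : dist x c ≤ r) :
    chiB c r x = 1 := by
  unfold chiB
  have : dist x c / r ≤ 1 := (div_le_one hr).2 hx
  rw [min_eq_left (by linarith)]; simp
theorem chiB_eq_zero {n : ℕ} {c : En n} {r : ℝ} (hr : 0 < r) {x : En n} (hx : 2 * r ≤ dist x c) :
    chiB c r x = 0 := by
  unfold chiB
  have : 2 ≤ dist x c / r := (le_div_iff₀ hr).2 hx
  rw [max_eq_left]
  exact (min_le_right _ _).trans (by linarith)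
theorem chiB_lip {n : ℕ} {c : En n} {r : ℝ} (hr : 0 < r) (x y : En n) :
    |chiB c r y - chiB c r x| ≤ 1 / r * ‖y - x‖ := by
  unfold chiB
  refine (abs_max_sub_max_le_max _ _ _ _).trans (max_le (by simp; positivity) ?_)
  refine (abs_min_sub_min_le_max _ _ _ _).trans (max_le (by simp; positivity) ?_)
  have : 2 - dist y c / r - (2 - dist x c / r) = (1 / r) * (dist x c - dist y c) := by
    field_simp; ring
  rw [this, abs_mul, abs_of_pos (by positivity : 0 < 1 / r), ← dist_eq_norm, dist_comm y x]
  gcongr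
  exact abs_dist_sub_le x y c

noncomputable def hB {n : ℕ} {F : Type*} [NormedAddCommGroup F] (G : En n → F) (l : ℝ) (c : En n)
    (r : ℝ) (x : En n) : ℝ := chiB c r x * max 0 (l - ‖G (foldB c r x)‖)

theorem hB_slope_in {n : ℕ} {F : Type*} [NormedAddCommGroup F] [NormedSpace ℝ F]
    {G : En n → F} (hG : ContDiff ℝ 1 G) (l : ℝ) {c : En n} {r : ℝ} (hr : 0 < r) (x : En n) :
    SlopeLE (hB G l c r) x
      (‖fderiv ℝ G (foldB c r x)‖ + 1 / r * max 0 (l - ‖G (foldB c r x)‖)) := by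
  apply slope_mul (chiB_nonneg c r) (chiB_le_one c r) (chiB_lip hr x) (le_max_left _ _)
  intro b hb
  filter_upwards [slope_norm_comp hG (foldB_lipschitz (c := c) hr) x b hb] with y hy
  have hb0 : 0 ≤ b := (norm_nonneg _).trans hb.le
  refine (abs_max_sub_max_le_max _ _ _ _).trans (max_le (by simp; positivity) ?_)
  rw [abs_sub_comm, sub_sub_sub_cancel_left]
  exact hy

theorem hB_slope_out {n : ℕ} {F : Type*} [NormedAddCommGroup F] [NormedSpace ℝ F]
    {G : En n → F} (l : ℝ) {c : En n} {r : ℝ} (hr : 0 < r) {x : En n}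
    (hx : x ∉ closedBall c (2 * r)) :
    SlopeLE (hB G l c r) x 0 := by
  intro b hb
  have : (closedBall c (2 * r))ᶜ ∈ 𝓝 x := isClosed_closedBall.isOpen_compl.mem_nhds hx
  have e : ∀ y ∈ (closedBall c (2 * r))ᶜ, hB G l c r y = 0 := by
    intro y hy
    unfold hB
    rw [mem_compl_iff, mem_closedBall, not_le] at hy
    rw [chiB_eq_zero hr hy.le, zero_mul]
  filter_upwards [this] with y hy
  rw [e y hy, e x hx]
  simp; positivity

theorem hB_nonneg {n : ℕ} {F : Type*} [NormedAddCommGroup F] (G : En n → F) (l : ℝ) (c : En n)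
    (r : ℝ) (x : En n) : 0 ≤ hB G l c r x := mul_nonneg (chiB_nonneg _ _ _) (le_max_left _ _)

theorem hB_ge {n : ℕ} {F : Type*} [NormedAddCommGroup F] (G : En n → F) (l : ℝ) {c : En n}
    {r : ℝ} (hr : 0 < r) {x : En n} (hx : x ∈ ball c r) : l - ‖G x‖ ≤ hB G l c r x := by
  have hx' : dist x c ≤ r := le_of_lt hx
  unfold hB
  rw [chiB_eq_one hr hx', one_mul]
  unfold foldB
  rw [if_pos hx']
  exact le_max_right _ _

theorem hB_support {n : ℕ} {F : Type*} [NormedAddCommGroup F] (G : En n → F) (l : ℝ) (c : En n)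
    {r : ℝ} (hr : 0 < r) : HasCompactSupport (hB G l c r) := by
  apply HasCompactSupport.intro (isCompact_closedBall c (2 * r))
  intro x hx
  rw [mem_closedBall, not_le] at hx
  unfold hB
  rw [chiB_eq_zero hr hx.le, zero_mul]

theorem hB_lip {n : ℕ} {F : Type*} [NormedAddCommGroup F] {G : En n → F} {K : ℝ≥0}
    (hG : LipschitzWith K G) {l : ℝ} (hl : 0 ≤ l) (c : En n) {r : ℝ} (hr : 0 < r) :
    ∃ K', LipschitzWith K' (hB G l c r) := by
  refine ⟨K + Real.toNNReal (1 / r * l), LipschitzWith.of_dist_le_mul fun y x => ?_⟩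
  rw [NNReal.coe_add, Real.coe_toNNReal _ (by positivity), Real.dist_eq, dist_eq_norm]
  unfold hB
  set m := fun z => max 0 (l - ‖G (foldB c r z)‖) with hm
  have hm0 : 0 ≤ m x := le_max_left _ _
  have hml : m x ≤ l := max_le hl (by linarith [norm_nonneg (G (foldB c r x))])
  have hmd : |m y - m x| ≤ K * ‖y - x‖ := by
    refine (abs_max_sub_max_le_max _ _ _ _).trans (max_le (by simp; positivity) ?_)
    have : l - ‖G (foldB c r y)‖ - (l - ‖G (foldB c r x)‖) =
      ‖G (foldB c r x)‖ - ‖G (foldB c r y)‖ := by ring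
    rw [this, abs_sub_comm]
    refine (abs_norm_sub_norm_le _ _).trans ?_
    rw [← dist_eq_norm]
    refine (hG.dist_le_mul _ _).trans ?_
    gcongr
    simpa [dist_eq_norm y x] using (foldB_lipschitz (c := c) hr).dist_le_mul y x
  calc |chiB c r y * m y - chiB c r x * m x|
      = |chiB c r y * (m y - m x) + (chiB c r y - chiB c r x) * m x| := by congr 1; ring
    _ ≤ chiB c r y * |m y - m x| + |chiB c r y - chiB c r x| * m x := by
        refine (abs_add_le _ _).trans (le_of_eq ?_)
        rw [abs_mul, abs_mul, abs_of_nonneg (chiB_nonneg _ _ _), abs_of_nonneg hm0]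
    _ ≤ 1 * (K * ‖y - x‖) + (1 / r * ‖y - x‖) * l := by
        gcongr
        · exact chiB_le_one _ _ _
        · exact chiB_lip hr _ _
    _ = _ := by ring

end

section
open MeasureTheory Metric Filter Set
open scoped ENNReal Topology NNReal

theorem aux_add_pow {p : ℝ} (hp : 1 ≤ p) (a b : ℝ≥0∞) : (a + b) ^ p ≤ 2 ^ p * (a ^ p + b ^ p) := by
  refine (ENNReal.rpow_add_le_mul_rpow_add_rpow a b hp).trans ?_
  gcongr
  · norm_num
  · linarith

theorem aux_finmax {n : ℕ} {ι : Type*} (s : Finset ι) (h A : ι → En n → ℝ)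
    (hlip : ∀ i ∈ s, ∃ K, LipschitzWith K (h i)) (hc : ∀ i ∈ s, HasCompactSupport (h i))
    (hA0 : ∀ i ∈ s, ∀ x, 0 ≤ A i x) (hA : ∀ i ∈ s, ∀ x, SlopeLE (h i) x (A i x)) {p : ℝ}
    (hp : 1 ≤ p) :
    ∃ H : En n → ℝ, (∃ K, LipschitzWith K H) ∧ HasCompactSupport H ∧ (∀ x, 0 ≤ H x) ∧
      (∀ i ∈ s, ∀ x, h i x ≤ H x) ∧ ∀ x, ∃ a : ℝ, 0 ≤ a ∧ SlopeLE H x a ∧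
        ENNReal.ofReal a ^ p ≤ ∑ i ∈ s, ENNReal.ofReal (A i x) ^ p := by
  classical
  induction s using Finset.induction_on with
  | empty =>
    refine ⟨fun _ => 0, ⟨0, LipschitzWith.const 0⟩, HasCompactSupport.zero, fun _ => le_rfl,
      by simp, fun x => ⟨0, le_rfl, ?_, ?_⟩⟩
    · intro b hb
      refine Eventually.of_forall fun y => ?_
      simp; positivity
    · simp; linarith
  | insert i s his ih =>
    obtain ⟨H, ⟨K, hK⟩, h2, h3, h4, h5⟩ := ih
      (fun i hi => hlip i (Finset.mem_insert_of_mem hi))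
      (fun i hi => hc i (Finset.mem_insert_of_mem hi))
      (fun i hi => hA0 i (Finset.mem_insert_of_mem hi))
      (fun i hi => hA i (Finset.mem_insert_of_mem hi))
    obtain ⟨K', hK'⟩ := hlip i (Finset.mem_insert_self _ _)
    refine ⟨fun x => max (h i x) (H x), ⟨_, hK'.max hK⟩, ?_, fun x => (h3 x).trans (le_max_right _ _),
      ?_, ?_⟩
    · have := (hc i (Finset.mem_insert_self _ _)).comp₂_left h2 (m := max) (by simp)
      exact this
    · intro j hj x
      rcases Finset.mem_insert.1 hj with rfl | hj
      · exact le_max_left _ _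
      · exact (h4 j hj x).trans (le_max_right _ _)
    · intro x
      obtain ⟨a, ha0, ha1, ha2⟩ := h5 x
      refine ⟨max (A i x) a, ha0.trans (le_max_right _ _),
        (hA i (Finset.mem_insert_self _ _) x).max ha1, ?_⟩
      rw [Finset.sum_insert his]
      rcases le_total (A i x) a with hh | hh
      · rw [max_eq_right hh]; exact ha2.trans le_add_self
      · rw [max_eq_left hh]; exact le_self_add

noncomputable def AB {n : ℕ} {F : Type*} [NormedAddCommGroup F] [NormedSpace ℝ F]
    (G : En n → F) (l : ℝ) (c : En n) (r : ℝ) (x : En n) : ℝ :=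
  (closedBall c (2 * r)).indicator
    (fun x => ‖fderiv ℝ G (foldB c r x)‖ + 1 / r * max 0 (l - ‖G (foldB c r x)‖)) x

theorem AB_nonneg {n : ℕ} {F : Type*} [NormedAddCommGroup F] [NormedSpace ℝ F]
    (G : En n → F) (l : ℝ) (c : En n) {r : ℝ} (hr : 0 < r) (x : En n) : 0 ≤ AB G l c r x := by
  apply indicator_nonneg
  intro y _
  positivity

theorem AB_slope {n : ℕ} {F : Type*} [NormedAddCommGroup F] [NormedSpace ℝ F]
    {G : En n → F} (hG : ContDiff ℝ 1 G) (l : ℝ) (c : En n) {r : ℝ} (hr : 0 < r) (x : En n) :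
    SlopeLE (hB G l c r) x (AB G l c r x) := by
  unfold AB
  by_cases hx : x ∈ closedBall c (2 * r)
  · rw [indicator_of_mem hx]; exact hB_slope_in hG l hr x
  · rw [indicator_of_notMem hx]; exact hB_slope_out l hr hx

theorem AB_int {n : ℕ} {F : Type*} [NormedAddCommGroup F] [NormedSpace ℝ F] [CompleteSpace F]
    {G : En n → F} (hG : ContDiff ℝ 1 G) {p : ℝ} (hp : 1 ≤ p) {c : En n} {r : ℝ} (hr : 0 < r)
    {l : ℝ} (hl : ENNReal.ofReal l * volume (closedBall c r) ≤ ∫⁻ x in closedBall c r, ‖G x‖ₑ) :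
    ∫⁻ x, ENNReal.ofReal (AB G l c r x) ^ p ≤
      (2 ^ p * ((1 + 4 ^ n) * (1 + 2 ^ n * 2 ^ p))) *
        ∫⁻ x in closedBall c r, ‖fderiv ℝ G x‖ₑ ^ p := by
  have hp0 : 0 < p := by linarith
  have hd : Measurable fun x => ‖fderiv ℝ G x‖ₑ ^ p :=
    (hG.continuous_fderiv one_ne_zero).enorm.measurable.pow_const p
  have hm2 : Measurable fun x => ENNReal.ofReal (1 / r) ^ p * ENNReal.ofReal (l - ‖G x‖) ^ p :=
    ((ENNReal.measurable_ofReal.comp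
      (hG.continuous.norm.measurable.const_sub l)).pow_const p).const_mul _
  set Ψ : En n → ℝ≥0∞ := fun x => ‖fderiv ℝ G x‖ₑ ^ p +
    ENNReal.ofReal (1 / r) ^ p * ENNReal.ofReal (l - ‖G x‖) ^ p with hΨ
  have hΨm : Measurable Ψ := hd.add hm2
  have h1 : ∀ x, ENNReal.ofReal (AB G l c r x) ^ p ≤
      (closedBall c (2 * r)).indicator (fun x => 2 ^ p * Ψ (foldB c r x)) x := by
    intro x
    unfold AB
    by_cases hx : x ∈ closedBall c (2 * r)
    · rw [indicator_of_mem hx, indicator_of_mem hx,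
        ENNReal.ofReal_add (norm_nonneg _) (by positivity), ENNReal.ofReal_mul (by positivity)]
      refine (aux_add_pow hp _ _).trans ?_
      rw [ENNReal.mul_rpow_of_nonneg _ _ hp0.le, ofReal_norm, ENNReal.ofReal_max,
        ENNReal.ofReal_zero, max_eq_right zero_le]
    · rw [indicator_of_notMem hx, indicator_of_notMem hx]
      simp [hp0]
  calc _ ≤ ∫⁻ x in closedBall c (2 * r), 2 ^ p * Ψ (foldB c r x) := by
        rw [← lintegral_indicator measurableSet_closedBall]
        exact lintegral_mono h1
    _ = 2 ^ p * ∫⁻ x in closedBall c (2 * r), Ψ (foldB c r x) :=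
        lintegral_const_mul _ (hΨm.comp (foldB_lipschitz hr).continuous.measurable)
    _ ≤ 2 ^ p * ((1 + 4 ^ n) * ∫⁻ x in closedBall c r, Ψ x) := by
        gcongr; exact foldB_lintegral hr hΨm
    _ = 2 ^ p * ((1 + 4 ^ n) * ((∫⁻ x in closedBall c r, ‖fderiv ℝ G x‖ₑ ^ p) +
          ENNReal.ofReal (1 / r) ^ p * ∫⁻ x in closedBall c r, ENNReal.ofReal (l - ‖G x‖) ^ p)) := by
        rw [hΨ, lintegral_add_left hd, lintegral_const_mul]
        exact ((ENNReal.measurable_ofReal.comp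
          (hG.continuous.norm.measurable.const_sub l)).pow_const p)
    _ ≤ 2 ^ p * ((1 + 4 ^ n) * ((∫⁻ x in closedBall c r, ‖fderiv ℝ G x‖ₑ ^ p) +
          ENNReal.ofReal (1 / r) ^ p * (2 ^ n * ENNReal.ofReal (2 * r) ^ p *
            ∫⁻ x in closedBall c r, ‖fderiv ℝ G x‖ₑ ^ p))) := by
        gcongr
        exact aux_poincare hG hp hr hl
    _ = _ := by
        have : ENNReal.ofReal (1 / r) ^ p * ENNReal.ofReal (2 * r) ^ p = 2 ^ p := by
          rw [← ENNReal.mul_rpow_of_nonneg _ _ hp0.le, ← ENNReal.ofReal_mul (by positivity)]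
          congr 1
          have : 1 / r * (2 * r) = 2 := by field_simp
          rw [this]; simp
        rw [← this]; ring

theorem aux_L4 (n : ℕ) (p : ℝ) (hp : 1 ≤ p) : ∃ C : ℝ≥0∞, C ≠ ∞ ∧
    ∀ {F : Type} [NormedAddCommGroup F] [NormedSpace ℝ F] [CompleteSpace F]
      (G : En n → F) (_ : ContDiff ℝ 1 G) (_ : HasCompactSupport G) (S : Set (En n))
      (_ : IsCompact S) (l : ℝ) (_ : 0 < l) (R : ℝ)
      (_ : ∀ x ∈ S, ∃ r, 0 < r ∧ r ≤ R ∧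
        ENNReal.ofReal l * volume (closedBall x r) ≤ ∫⁻ x in closedBall x r, ‖G x‖ₑ),
      capK p S ≤ C * ENNReal.ofReal (1 / l) ^ p * ∫⁻ x, ‖fderiv ℝ G x‖ₑ ^ p := by
  have hp0 : 0 < p := by linarith
  obtain ⟨N, τ, hτ, hN⟩ := HasBesicovitchCovering.no_satelliteConfig (α := En n)
  set C0 : ℝ≥0∞ := 2 ^ p * ((1 + 4 ^ n) * (1 + 2 ^ n * 2 ^ p)) with hC0
  have h2p : (2 : ℝ≥0∞) ^ p ≠ ∞ := ENNReal.rpow_ne_top_of_nonneg hp0.le (by simp)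
  have hC0t : C0 ≠ ∞ := by
    refine ENNReal.mul_ne_top h2p (ENNReal.mul_ne_top (by simp) ?_)
    exact ENNReal.add_ne_top.2 ⟨by simp, ENNReal.mul_ne_top (by simp) h2p⟩
  refine ⟨2 ^ p * (2 ^ p * (1 + C0 * N)), ?_, ?_⟩
  · refine ENNReal.mul_ne_top h2p (ENNReal.mul_ne_top h2p ?_)
    exact ENNReal.add_ne_top.2 ⟨by simp, ENNReal.mul_ne_top hC0t (by simp)⟩
  intro F _ _ _ G hG hGc S hS l hl R hSR
  choose! rad hr0 hrR hrl using hSR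
  let q : Besicovitch.BallPackage S (En n) :=
    ⟨fun x => x, fun x => rad x, fun x => hr0 x x.2, R, fun x => hrR x x.2⟩
  obtain ⟨s, hs1, hs2⟩ := Besicovitch.exist_disjoint_covering_families hτ hN q
  obtain ⟨t0, ht0, htf, htS⟩ := hS.elim_finite_subcover_image
    (b := {z : Fin N × S | z.2 ∈ s z.1}) (c := fun z => ball (z.2 : En n) (rad z.2))
    (fun _ _ => isOpen_ball) (by
      intro x hx
      have : x ∈ range q.c := ⟨⟨x, hx⟩, rfl⟩
      have := hs2 this
      simp only [mem_iUnion] at this ⊢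
      obtain ⟨i, j, hj, hxj⟩ := this
      exact ⟨(i, j), hj, hxj⟩)
  obtain ⟨t, rfl⟩ := htf.exists_finset_coe
  obtain ⟨K, hK⟩ := hG.lipschitzWith_of_hasCompactSupport hGc one_ne_zero
  obtain ⟨H, ⟨KH, hKH⟩, hHc, hH0, hHge, hHs⟩ := aux_finmax t
    (fun z => hB G l (z.2 : En n) (rad z.2)) (fun z => AB G l (z.2 : En n) (rad z.2))
    (fun z _ => hB_lip hK hl.le _ (hr0 z.2 z.2.2)) (fun z _ => hB_support G l _ (hr0 z.2 z.2.2))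
    (fun z _ => AB_nonneg G l _ (hr0 z.2 z.2.2)) (fun z _ => AB_slope hG l _ (hr0 z.2 z.2.2)) hp
  have hABm : ∀ z ∈ t, AEMeasurable
      (fun x => ENNReal.ofReal (AB G l (z.2 : En n) (rad z.2) x) ^ p) volume := by
    intro z _
    have hfc := (foldB_lipschitz (c := (z.2 : En n)) (hr0 z.2 z.2.2)).continuous
    have : Continuous fun x => ‖fderiv ℝ G (foldB (z.2 : En n) (rad z.2) x)‖ + 1 / rad z.2 *
        max 0 (l - ‖G (foldB (z.2 : En n) (rad z.2) x)‖) := by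
      have h1 := ((hG.continuous_fderiv one_ne_zero).comp hfc).norm
      have h2 := (hG.continuous.comp hfc).norm
      exact h1.add (continuous_const.mul (continuous_const.max (continuous_const.sub h2)))
    exact ((ENNReal.measurable_ofReal.comp
      (this.measurable.indicator measurableSet_closedBall)).pow_const p).aemeasurable
  have hdm : Measurable fun x => ‖fderiv ℝ G x‖ₑ ^ p :=
    (hG.continuous_fderiv one_ne_zero).enorm.measurable.pow_const p
  set I := ∫⁻ x, ‖fderiv ℝ G x‖ₑ ^ p with hI
  have hsum : ∑ z ∈ t, ∫⁻ x, ENNReal.ofReal (AB G l (z.2 : En n) (rad z.2) x) ^ p ≤ C0 * N * I := by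
    calc _ ≤ ∑ z ∈ t, C0 * ∫⁻ x in closedBall (z.2 : En n) (rad z.2), ‖fderiv ℝ G x‖ₑ ^ p :=
          Finset.sum_le_sum fun z _ => AB_int hG hp (hr0 z.2 z.2.2) (hrl z.2 z.2.2)
      _ = C0 * ∑ i : Fin N, ∑ z ∈ t with z.1 = i,
            ∫⁻ x in closedBall (z.2 : En n) (rad z.2), ‖fderiv ℝ G x‖ₑ ^ p := by
          rw [← Finset.mul_sum, Finset.sum_fiberwise]
      _ ≤ C0 * ∑ i : Fin N, I := by
          gcongr with i
          rw [← lintegral_biUnion_finset]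
          · exact setLIntegral_le_lintegral _ _
          · intro z hz z' hz' hne
            simp only [Finset.coe_filter, mem_ofPred_eq] at hz hz'
            have hz1 : z.2 ∈ s i := hz.2 ▸ ht0 hz.1
            have hz1' : z'.2 ∈ s i := hz'.2 ▸ ht0 hz'.1
            refine hs1 i hz1 hz1' ?_
            intro h
            exact hne (Prod.ext (hz.2.trans hz'.2.symm) h)
          · exact fun _ _ => measurableSet_closedBall
      _ = _ := by simp [mul_assoc]
  have hv := aux_L1 (v := fun x => ‖G x‖ + H x) (K := K + KH) (F := S) (l := l) (p := p) ?_ ?_ hl ?_ hp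
  · refine hv.trans ?_
    have hpt : ∀ x, ‖fderiv ℝ (fun x => ‖G x‖ + H x) x‖ₑ ^ p ≤ 2 ^ p * (‖fderiv ℝ G x‖ₑ ^ p +
        ∑ z ∈ t, ENNReal.ofReal (AB G l (z.2 : En n) (rad z.2) x) ^ p) := by
      intro x
      obtain ⟨a, ha0, ha1, ha2⟩ := hHs x
      have h1 := (slope_norm_comp hG LipschitzWith.id x).add ha1
      have h2 := h1.fderiv_le (by positivity)
      simp only [id] at h2
      calc _ ≤ (‖fderiv ℝ G x‖ₑ + ENNReal.ofReal a) ^ p := by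
            gcongr
            rw [← ofReal_norm, ← ofReal_norm, ← ENNReal.ofReal_add (norm_nonneg _) ha0]
            exact ENNReal.ofReal_le_ofReal h2
        _ ≤ 2 ^ p * (‖fderiv ℝ G x‖ₑ ^ p + ENNReal.ofReal a ^ p) := aux_add_pow hp _ _
        _ ≤ _ := by gcongr
    have hint : ∫⁻ x, ‖fderiv ℝ (fun x => ‖G x‖ + H x) x‖ₑ ^ p ≤ 2 ^ p * (1 + C0 * N) * I := by
      calc _ ≤ ∫⁻ x, 2 ^ p * (‖fderiv ℝ G x‖ₑ ^ p +
            ∑ z ∈ t, ENNReal.ofReal (AB G l (z.2 : En n) (rad z.2) x) ^ p) := lintegral_mono hpt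
        _ = 2 ^ p * (I +
            ∑ z ∈ t, ∫⁻ x, ENNReal.ofReal (AB G l (z.2 : En n) (rad z.2) x) ^ p) := by
            rw [lintegral_const_mul' _ _ h2p, lintegral_add_left hdm, lintegral_finsetSum' t hABm]
        _ ≤ 2 ^ p * (I + C0 * N * I) := by gcongr
        _ = _ := by ring
    have e2 : ENNReal.ofReal (2 / l) ^ p = 2 ^ p * ENNReal.ofReal (1 / l) ^ p := by
      rw [← ENNReal.mul_rpow_of_nonneg _ _ hp0.le]
      congr 1
      rw [div_eq_mul_one_div, ENNReal.ofReal_mul (by norm_num)]; simp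
    rw [e2]
    calc _ ≤ 2 ^ p * ENNReal.ofReal (1 / l) ^ p * (2 ^ p * (1 + C0 * N) * I) := by gcongr
      _ = _ := by ring
  · exact (lipschitzWith_one_norm.comp hK |>.weaken (by simp)).add hKH
  · exact hGc.norm.add hHc
  · intro x hx
    have := htS hx
    simp only [mem_iUnion] at this
    obtain ⟨z, hz, hxz⟩ := this
    have h1 := hB_ge G l (hr0 z.2 z.2.2) hxz
    have h2 := hHge z hz x
    show l ≤ ‖G x‖ + H x
    linarith

end

section
open MeasureTheory Metric Filter Set
open scoped ENNReal Topology NNReal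

noncomputable def mol {n : ℕ} (φ : ContDiffBump (0 : En n)) (f : En n → ℝ) : En n → ℝ :=
  convolution (φ.normed volume) f (ContinuousLinearMap.lsmul ℝ ℝ) volume

theorem mol_apply {n : ℕ} (φ : ContDiffBump (0 : En n)) (f : En n → ℝ) (x : En n) :
    mol φ f x = ∫ t, φ.normed volume t * f (x - t) := rfl

theorem mol_contDiff {n : ℕ} (φ : ContDiffBump (0 : En n)) {f : En n → ℝ}
    (hf : LocallyIntegrable f volume) : ContDiff ℝ (⊤ : ℕ∞) (mol φ f) :=
  φ.hasCompactSupport_normed.contDiff_convolution_left _ φ.contDiff_normed hf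

theorem mol_enorm_le {n : ℕ} (φ : ContDiffBump (0 : En n)) (f : En n → ℝ) (x : En n) :
    ‖mol φ f x‖ₑ ≤ ∫⁻ t, ‖φ.normed volume t‖ₑ * ‖f (x - t)‖ₑ := by
  rw [mol_apply]
  refine (enorm_integral_le_lintegral_enorm _).trans (le_of_eq ?_)
  simp only [enorm_mul]

theorem mol_fderiv_apply {n : ℕ} (φ : ContDiffBump (0 : En n)) {f g : En n → ℝ} {v : En n}
    (hf : LocallyIntegrable f volume) (hg : HasWeakPartialOn univ f g v) (x : En n) :
    fderiv ℝ (mol φ f) x v = ∫ t, φ.normed volume t * g (x - t) := by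
  have hφs : ContDiff ℝ (⊤ : ℕ∞) (φ.normed (volume : Measure (En n))) := φ.contDiff_normed
  have hφ1 : ContDiff ℝ 1 (φ.normed (volume : Measure (En n))) := φ.contDiff_normed
  have hφc := φ.hasCompactSupport_normed (μ := (volume : Measure (En n)))
  have h1 := hφc.hasFDerivAt_convolution_left (ContinuousLinearMap.lsmul ℝ ℝ) hφ1 hf x
  have h1' : HasFDerivAt (mol φ f) _ x := h1
  rw [h1'.fderiv]
  have hex : Integrable (fun t => (ContinuousLinearMap.precompL (En n) (ContinuousLinearMap.lsmul ℝ ℝ :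
      ℝ →L[ℝ] ℝ →L[ℝ] ℝ)) (fderiv ℝ (φ.normed (volume : Measure (En n))) t) (f (x - t))) volume :=
    (HasCompactSupport.convolutionExists_left _ (hφc.fderiv (𝕜 := ℝ))
      (hφ1.continuous_fderiv one_ne_zero) hf) x
  have e1 : (convolution (fderiv ℝ (φ.normed (volume : Measure (En n)))) f
      (ContinuousLinearMap.precompL (En n) (ContinuousLinearMap.lsmul ℝ ℝ)) volume x) v =
      ∫ t, fderiv ℝ (φ.normed (volume : Measure (En n))) t v * f (x - t) := by
    rw [convolution_def]
    rw [ContinuousLinearMap.integral_apply hex]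
    rfl
  rw [e1]
  have hη : IsTest univ (fun y => φ.normed (volume : Measure (En n)) (x - y)) := by
    refine ⟨hφs.comp (contDiff_const.sub contDiff_id), ?_, subset_univ _⟩
    exact hφc.comp_homeomorph (Homeomorph.subLeft x)
  have h2 := hg _ hη
  have hfd : ∀ y, fderiv ℝ (fun y => φ.normed (volume : Measure (En n)) (x - y)) y v =
      - fderiv ℝ (φ.normed (volume : Measure (En n))) (x - y) v := by
    intro y
    have : HasFDerivAt (fun y => φ.normed (volume : Measure (En n)) (x - y)) _ y :=
      ((hφ1.differentiable one_ne_zero (x - y)).hasFDerivAt).comp y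
        ((hasFDerivAt_id y).const_sub x)
    rw [this.fderiv]
    simp
  simp only [hfd, mul_neg, integral_neg, neg_inj] at h2
  rw [← integral_sub_left_eq_self (fun y => f y * fderiv ℝ (φ.normed volume) (x - y) v) volume x,
    ← integral_sub_left_eq_self (fun y => g y * φ.normed volume (x - y)) volume x] at h2
  simp only [sub_sub_cancel] at h2
  simp only [mul_comm] at h2 ⊢
  exact h2

theorem aux_opnorm_sum {n : ℕ} (L : En n →L[ℝ] ℝ) :
    ‖L‖ₑ ≤ ∑ j, ‖L (EuclideanSpace.single j 1)‖ₑ := by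
  have : ‖L‖ ≤ ∑ j, ‖L (EuclideanSpace.single j 1)‖ := by
    refine L.opNorm_le_bound (by positivity) fun v => ?_
    have hv : v = ∑ j, v j • EuclideanSpace.single j (1 : ℝ) := by
      conv_lhs => rw [← (EuclideanSpace.basisFun (Fin n) ℝ).sum_repr v]
      simp
    conv_lhs => rw [hv, map_sum]
    rw [Finset.sum_mul]
    refine (norm_sum_le _ _).trans (Finset.sum_le_sum fun j _ => ?_)
    rw [map_smul, norm_smul, mul_comm]
    gcongr
    exact PiLp.norm_apply_le v j
  calc ‖L‖ₑ = ENNReal.ofReal ‖L‖ := (ofReal_norm _).symm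
    _ ≤ ENNReal.ofReal (∑ j, ‖L (EuclideanSpace.single j 1)‖) := ENNReal.ofReal_le_ofReal this
    _ = _ := by
      rw [ENNReal.ofReal_sum_of_nonneg (fun _ _ => norm_nonneg _)]
      simp only [ofReal_norm]

theorem aux_enorm_sum {n : ℕ} (y : En n) : ‖y‖ₑ ≤ ∑ j, ‖y j‖ₑ := by
  have : ‖y‖ ≤ ∑ j, ‖y j‖ := by
    have hv : y = ∑ j, y j • EuclideanSpace.single j (1 : ℝ) := by
      conv_lhs => rw [← (EuclideanSpace.basisFun (Fin n) ℝ).sum_repr y]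
      simp
    conv_lhs => rw [hv]
    refine (norm_sum_le _ _).trans (Finset.sum_le_sum fun j _ => ?_)
    rw [norm_smul]; simp
  calc ‖y‖ₑ = ENNReal.ofReal ‖y‖ := (ofReal_norm _).symm
    _ ≤ ENNReal.ofReal (∑ j, ‖y j‖) := ENNReal.ofReal_le_ofReal this
    _ = _ := by
      rw [ENNReal.ofReal_sum_of_nonneg (fun _ _ => norm_nonneg _)]
      simp only [ofReal_norm]

theorem aux_enorm_coord {n : ℕ} (y : En n) (j : Fin n) : ‖y j‖ₑ ≤ ‖y‖ₑ := by
  rw [← ofReal_norm, ← ofReal_norm]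
  exact ENNReal.ofReal_le_ofReal (PiLp.norm_apply_le y j)

theorem mol_fderiv_le {n : ℕ} (φ : ContDiffBump (0 : En n)) {f : En n → ℝ} {g : En n → En n}
    (hf : LocallyIntegrable f volume) (hg : HasWeakGradientOn univ f g) (x : En n) :
    ‖fderiv ℝ (mol φ f) x‖ₑ ≤ n * ∫⁻ t, ‖φ.normed volume t‖ₑ * ‖g (x - t)‖ₑ := by
  calc _ ≤ ∑ j, ‖fderiv ℝ (mol φ f) x (EuclideanSpace.single j 1)‖ₑ := aux_opnorm_sum _
    _ ≤ ∑ _j : Fin n, ∫⁻ t, ‖φ.normed volume t‖ₑ * ‖g (x - t)‖ₑ := by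
        gcongr with j
        rw [mol_fderiv_apply φ hf (hg j) x]
        refine (enorm_integral_le_lintegral_enorm _).trans ?_
        gcongr with t
        rw [enorm_mul]
        gcongr
        exact aux_enorm_coord _ _
    _ = _ := by simp

noncomputable def vmol {n : ℕ} (φ : ContDiffBump (0 : En n)) (g : En n → En n) (x : En n) : En n :=
  WithLp.toLp 2 fun i => mol φ (fun y => g y i) x

theorem vmol_enorm_le {n : ℕ} (φ : ContDiffBump (0 : En n)) (g : En n → En n) (x : En n) :
    ‖vmol φ g x‖ₑ ≤ n * ∫⁻ t, ‖φ.normed volume t‖ₑ * ‖g (x - t)‖ₑ := by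
  refine (aux_enorm_sum _).trans ?_
  calc _ ≤ ∑ _j : Fin n, ∫⁻ t, ‖φ.normed volume t‖ₑ * ‖g (x - t)‖ₑ := by
        gcongr with j
        refine (mol_enorm_le φ (fun y => g y j) x).trans ?_
        gcongr with t
        exact aux_enorm_coord _ _
    _ = _ := by simp

theorem vmol_contDiff {n : ℕ} (φ : ContDiffBump (0 : En n)) {g : En n → En n}
    (hf : ∀ i, LocallyIntegrable (fun y => g y i) volume) : ContDiff ℝ (⊤ : ℕ∞) (vmol φ g) := by
  rw [contDiff_euclidean]
  exact fun i => mol_contDiff φ (hf i)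

theorem vmol_fderiv_le {n : ℕ} (φ : ContDiffBump (0 : En n)) {g : En n → En n}
    {h : En n → Fin n → En n} (hm : ∀ i, AEMeasurable (fun x => ‖h x i‖ₑ) volume)
    (hf : ∀ i, LocallyIntegrable (fun y => g y i) volume)
    (hg : ∀ i : Fin n, HasWeakGradientOn Set.univ (fun x => g x i) (fun x => h x i)) (x : En n) :
    ‖fderiv ℝ (vmol φ g) x‖ₑ ≤ n * ∫⁻ t, ‖φ.normed volume t‖ₑ * ∑ i, ‖h (x - t) i‖ₑ := by
  have hd : DifferentiableAt ℝ (vmol φ g) x := (vmol_contDiff φ hf).differentiable (by simp) x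
  have hcomp : ∀ i v, fderiv ℝ (vmol φ g) x v i = fderiv ℝ (mol φ (fun y => g y i)) x v := by
    intro i v
    have h1 := (EuclideanSpace.proj (𝕜 := ℝ) i : En n →L[ℝ] ℝ).hasFDerivAt.comp x hd.hasFDerivAt
    have h2 : HasFDerivAt (mol φ (fun y => g y i)) _ x := h1
    rw [h2.fderiv]; rfl
  have h1 : ‖fderiv ℝ (vmol φ g) x‖ₑ ≤ ∑ i, ‖fderiv ℝ (mol φ (fun y => g y i)) x‖ₑ := by
    have : ‖fderiv ℝ (vmol φ g) x‖ ≤ ∑ i, ‖fderiv ℝ (mol φ (fun y => g y i)) x‖ := by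
      refine ContinuousLinearMap.opNorm_le_bound _ (by positivity) fun v => ?_
      have h3 : ‖fderiv ℝ (vmol φ g) x v‖ ≤ ∑ i, ‖fderiv ℝ (vmol φ g) x v i‖ := by
        have := aux_enorm_sum (fderiv ℝ (vmol φ g) x v)
        simp only [← ofReal_norm] at this
        rw [← ENNReal.ofReal_sum_of_nonneg (fun _ _ => norm_nonneg _)] at this
        exact (ENNReal.ofReal_le_ofReal_iff (Finset.sum_nonneg fun _ _ => norm_nonneg _)).1 this
      refine h3.trans ?_
      rw [Finset.sum_mul]
      refine Finset.sum_le_sum fun i _ => ?_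
      rw [hcomp]
      exact ContinuousLinearMap.le_opNorm _ _
    calc _ = ENNReal.ofReal ‖fderiv ℝ (vmol φ g) x‖ := (ofReal_norm _).symm
      _ ≤ _ := ENNReal.ofReal_le_ofReal this
      _ = _ := by
        rw [ENNReal.ofReal_sum_of_nonneg (fun _ _ => norm_nonneg _)]
        simp only [ofReal_norm]
  refine h1.trans ?_
  have hms : ∀ i, AEMeasurable (fun t => ‖φ.normed volume t‖ₑ * ‖h (x - t) i‖ₑ) volume := by
    intro i
    refine φ.continuous_normed.enorm.measurable.aemeasurable.mul ?_
    exact (hm i).comp_quasiMeasurePreserving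
      (Measure.measurePreserving_sub_left (volume : Measure (En n)) x).quasiMeasurePreserving
  calc _ ≤ ∑ i, n * ∫⁻ t, ‖φ.normed volume t‖ₑ * ‖h (x - t) i‖ₑ :=
        Finset.sum_le_sum fun i _ => mol_fderiv_le φ (hf i) (hg i) x
    _ = _ := by
        rw [← Finset.mul_sum, ← lintegral_finsetSum' _ (fun i _ => hms i)]
        simp only [Finset.mul_sum]

end

section
open MeasureTheory Metric Filter Set
open scoped ENNReal Topology NNReal

theorem aux_cutoff (n : ℕ) : ∃ M : ℝ≥0, ∀ R : ℝ, 1 ≤ R → ∃ χ : En n → ℝ,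
    ContDiff ℝ (⊤ : ℕ∞) χ ∧ HasCompactSupport χ ∧ (∀ x ∈ ball (0 : En n) R, χ x = 1) ∧
    (∀ x, ‖χ x‖ ≤ 1) ∧ ∀ x, ‖fderiv ℝ χ x‖ ≤ M := by
  let ψ : ContDiffBump (0 : En n) := ⟨1, 2, one_pos, one_lt_two⟩
  have hψ : ContDiff ℝ (⊤ : ℕ∞) ψ := ψ.contDiff
  obtain ⟨M, hM⟩ := hψ.lipschitzWith_of_hasCompactSupport ψ.hasCompactSupport (by simp)
  refine ⟨M, fun R hR => ⟨fun x => ψ (R⁻¹ • x), hψ.comp (contDiff_const_smul R⁻¹), ?_, ?_, ?_, ?_⟩⟩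
  · exact ψ.hasCompactSupport.comp_smul (by positivity)
  · intro x hx
    apply ψ.one_of_mem_closedBall
    rw [mem_closedBall_zero_iff, norm_smul, norm_inv, Real.norm_of_nonneg (by linarith)]
    rw [mem_ball_zero_iff] at hx
    show R⁻¹ * ‖x‖ ≤ 1
    rw [inv_mul_le_iff₀ (by linarith)]; linarith
  · intro x
    rw [Real.norm_of_nonneg ψ.nonneg]; exact ψ.le_one
  · intro x
    apply norm_fderiv_le_of_lipschitz
    apply LipschitzWith.of_dist_le_mul
    intro a b
    refine (hM.dist_le_mul _ _).trans ?_
    gcongr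
    rw [dist_eq_norm, ← smul_sub, norm_smul, norm_inv, Real.norm_of_nonneg (by linarith), dist_eq_norm]
    have : R⁻¹ ≤ 1 := inv_le_one_of_one_le₀ hR
    nlinarith [norm_nonneg (a - b)]

def Vset {n : ℕ} (g : En n → En n) (l : ℝ) : Set (En n) :=
  {x | ∃ r, 0 < r ∧ ENNReal.ofReal l * volume (ball x r) < ∫⁻ y in ball x r, ‖g y‖ₑ}

theorem Vset_inner {n : ℕ} {g : En n → En n} {l : ℝ} {x : En n} (hx : x ∈ Vset g l) :
    ∃ r r', 0 < r ∧ r' < r ∧ ENNReal.ofReal l * volume (ball x r) < ∫⁻ y in ball x r', ‖g y‖ₑ := by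
  obtain ⟨r, hr, h⟩ := hx
  have hmono : Monotone fun k : ℕ => ball x (r - r / (k + 1)) := by
    intro a b hab
    apply ball_subset_ball
    gcongr
  have hU : ⋃ k : ℕ, ball x (r - r / ((k : ℝ) + 1)) = ball x r := by
    ext y
    simp only [mem_iUnion, mem_ball]
    constructor
    · rintro ⟨k, hk⟩
      have : 0 < r / ((k : ℝ) + 1) := by positivity
      linarith
    · intro hy
      obtain ⟨k, hk⟩ := exists_nat_one_div_lt (K := ℝ) (ε := (r - dist y x) / r) (by
        apply div_pos <;> linarith)
      refine ⟨k, ?_⟩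
      rw [lt_div_iff₀ hr] at hk
      have : r / ((k : ℝ) + 1) = 1 / (k + 1) * r := by ring
      linarith
  have ht := tendsto_measure_iUnion_atTop (μ := volume.withDensity fun y => ‖g y‖ₑ) hmono
  rw [hU] at ht
  rw [← withDensity_apply _ measurableSet_ball] at h
  obtain ⟨k, hk⟩ := (ht.eventually (lt_mem_nhds h)).exists
  refine ⟨r, _, hr, ?_, lt_of_lt_of_eq hk (withDensity_apply _ measurableSet_ball)⟩
  have : 0 < r / ((k : ℝ) + 1) := by positivity
  linarith

theorem Vset_open {n : ℕ} (g : En n → En n) (l : ℝ) : IsOpen (Vset g l) := by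
  rw [Metric.isOpen_iff]
  intro x hx
  obtain ⟨r, r', hr, hr', h⟩ := Vset_inner hx
  refine ⟨r - r', by linarith, fun y hy => ⟨r, hr, ?_⟩⟩
  rw [Measure.addHaar_ball_center] at h ⊢
  refine h.trans_le (lintegral_mono_set (ball_subset_ball' ?_))
  rw [mem_ball, dist_comm] at hy
  linarith

theorem aux_memLp_of {α E : Type*} [MeasurableSpace α] {μ : Measure α} [NormedAddCommGroup E]
    {p : ℝ} (hp : 1 ≤ p) {g : α → E} (hg : AEStronglyMeasurable g μ)
    (hi : Integrable (fun x => ‖g x‖ ^ p) μ) : MemLp g (ENNReal.ofReal p) μ := by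
  rw [← integrable_norm_rpow_iff hg (by simp; linarith) (by simp),
    ENNReal.toReal_ofReal (by linarith)]
  exact hi

noncomputable def seqB (n : ℕ) (k : ℕ) : ContDiffBump (0 : En n) :=
  ⟨1 / (k + 1), 2 / (k + 1), by positivity, by gcongr; norm_num⟩

theorem seqB_tendsto (n : ℕ) : Tendsto (fun k => (seqB n k).rOut) atTop (𝓝 0) := by
  have := (tendsto_one_div_add_atTop_nhds_zero_nat (𝕜 := ℝ)).const_mul 2
  simp only [mul_zero] at this
  refine this.congr fun k => ?_
  show 2 * (1 / ((k : ℝ) + 1)) = 2 / (k + 1)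
  ring

theorem seqB_ratio (n k : ℕ) : (seqB n k).rOut ≤ 2 * (seqB n k).rIn := by
  show 2 / ((k : ℝ) + 1) ≤ 2 * (1 / (k + 1))
  apply le_of_eq; ring

theorem vmol_tendsto {n : ℕ} {g : En n → En n}
    (hf : ∀ i, LocallyIntegrable (fun y => g y i) volume) :
    ∀ᵐ x, Tendsto (fun k => vmol (seqB n k) g x) atTop (𝓝 (g x)) := by
  have : ∀ᵐ x, ∀ i, Tendsto (fun k => mol (seqB n k) (fun y => g y i) x) atTop (𝓝 (g x i)) := by
    rw [ae_all_iff]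
    intro i
    exact ContDiffBump.ae_convolution_tendsto_right_of_locallyIntegrable (seqB_tendsto n)
      (Eventually.of_forall (seqB_ratio n)) (hf i)
  filter_upwards [this] with x hx
  have h1 := tendsto_pi_nhds.2 hx
  exact ((PiLp.continuous_toLp 2 _).tendsto _).comp h1

theorem vmol_fatou {n : ℕ} {g : En n → En n}
    (hf : ∀ i, LocallyIntegrable (fun y => g y i) volume) (B : Set (En n)) {a : ℝ≥0∞}
    (ha : a < ∫⁻ y in B, ‖g y‖ₑ) :
    ∀ᶠ k in atTop, a < ∫⁻ y in B, ‖vmol (seqB n k) g y‖ₑ := by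
  refine eventually_lt_of_lt_liminf (ha.trans_le ?_)
  calc _ = ∫⁻ y in B, liminf (fun k => ‖vmol (seqB n k) g y‖ₑ) atTop := by
        apply lintegral_congr_ae
        filter_upwards [ae_restrict_of_ae (vmol_tendsto hf)] with y hy
        exact hy.enorm.liminf_eq.symm
    _ ≤ _ := lintegral_liminf_le fun k => (vmol_contDiff _ hf).continuous.enorm.measurable

end

section
open MeasureTheory Metric Filter Set
open scoped ENNReal Topology NNReal

theorem vmol_int {n : ℕ} {p : ℝ} (hp : 1 ≤ p) (φ : ContDiffBump (0 : En n)) {g : En n → En n}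
    (hg : AEStronglyMeasurable g volume) :
    ∫⁻ x, ‖vmol φ g x‖ₑ ^ p ≤ (n : ℝ≥0∞) ^ p * ∫⁻ x, ‖g x‖ₑ ^ p := by
  have hp0 : 0 ≤ p := by linarith
  have ht : (n : ℝ≥0∞) ^ p ≠ ∞ := ENNReal.rpow_ne_top_of_nonneg hp0 (by simp)
  calc _ ≤ ∫⁻ x, (n * ∫⁻ t, ‖φ.normed volume t‖ₑ * ‖g (x - t)‖ₑ) ^ p := by
        gcongr with x; exact vmol_enorm_le φ g x
    _ = (n : ℝ≥0∞) ^ p * ∫⁻ x, (∫⁻ t, ‖φ.normed volume t‖ₑ * ‖g (x - t)‖ₑ) ^ p := by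
        simp only [ENNReal.mul_rpow_of_nonneg _ _ hp0]
        rw [lintegral_const_mul' _ _ ht]
    _ ≤ _ := by
        gcongr 1
        exact aux_moll_int (w := fun t => ‖φ.normed volume t‖ₑ) (Ψ := fun x => ‖g x‖ₑ) hp
          φ.continuous_normed.enorm.measurable (aux_bump_enorm φ) hg.enorm

theorem vmol_fderiv_int {n : ℕ} {p : ℝ} (hp : 1 ≤ p) (φ : ContDiffBump (0 : En n))
    {g : En n → En n} {h : En n → Fin n → En n}
    (hm : ∀ i, AEMeasurable (fun x => ‖h x i‖ₑ) volume)
    (hf : ∀ i, LocallyIntegrable (fun y => g y i) volume)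
    (hg : ∀ i : Fin n, HasWeakGradientOn Set.univ (fun x => g x i) (fun x => h x i)) :
    ∫⁻ x, ‖fderiv ℝ (vmol φ g) x‖ₑ ^ p ≤ (n : ℝ≥0∞) ^ p * ∫⁻ x, (∑ i, ‖h x i‖ₑ) ^ p := by
  have hp0 : 0 ≤ p := by linarith
  have ht : (n : ℝ≥0∞) ^ p ≠ ∞ := ENNReal.rpow_ne_top_of_nonneg hp0 (by simp)
  calc _ ≤ ∫⁻ x, (n * ∫⁻ t, ‖φ.normed volume t‖ₑ * ∑ i, ‖h (x - t) i‖ₑ) ^ p := by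
        gcongr with x; exact vmol_fderiv_le φ hm hf hg x
    _ = (n : ℝ≥0∞) ^ p * ∫⁻ x, (∫⁻ t, ‖φ.normed volume t‖ₑ * ∑ i, ‖h (x - t) i‖ₑ) ^ p := by
        simp only [ENNReal.mul_rpow_of_nonneg _ _ hp0]
        rw [lintegral_const_mul' _ _ ht]
    _ ≤ _ := by
        gcongr 1
        exact aux_moll_int (w := fun t => ‖φ.normed volume t‖ₑ) (Ψ := fun x => ∑ i, ‖h x i‖ₑ) hp
          φ.continuous_normed.enorm.measurable (aux_bump_enorm φ)
          (Finset.aemeasurable_fun_sum _ fun i _ => hm i)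

theorem aux_L5 (n : ℕ) (p : ℝ) (hp : 1 ≤ p) : ∃ C : ℝ≥0∞, C ≠ ∞ ∧
    ∀ (g : En n → En n) (h : En n → Fin n → En n) (_ : AEStronglyMeasurable g volume)
      (_ : ∀ i, AEMeasurable (fun x => ‖h x i‖ₑ) volume)
      (_ : ∀ i, LocallyIntegrable (fun y => g y i) volume)
      (_ : ∀ i : Fin n, HasWeakGradientOn Set.univ (fun x => g x i) (fun x => h x i))
      (l : ℝ) (_ : 0 < l),
      cap p (Vset g l) ≤ C * ENNReal.ofReal (1 / l) ^ p *
        ((∫⁻ x, (∑ i, ‖h x i‖ₑ) ^ p) + ∫⁻ x, ‖g x‖ₑ ^ p) := by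
  have hp0 : 0 ≤ p := by linarith
  obtain ⟨C, hC, H⟩ := aux_L4 n p hp
  obtain ⟨M, hM⟩ := aux_cutoff n
  have hnt : (n : ℝ≥0∞) ^ p ≠ ∞ := ENNReal.rpow_ne_top_of_nonneg hp0 (by simp)
  have h2t : (2 : ℝ≥0∞) ^ p ≠ ∞ := ENNReal.rpow_ne_top_of_nonneg hp0 (by simp)
  have hMt : (M : ℝ≥0∞) ^ p ≠ ∞ := ENNReal.rpow_ne_top_of_nonneg hp0 (by simp)
  refine ⟨C * (2 ^ p * ((n : ℝ≥0∞) ^ p * (1 + (M : ℝ≥0∞) ^ p))), ?_, ?_⟩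
  · refine ENNReal.mul_ne_top hC (ENNReal.mul_ne_top h2t (ENNReal.mul_ne_top hnt ?_))
    exact ENNReal.add_ne_top.2 ⟨by simp, hMt⟩
  intro g h hgm hhm hgl hgw l hl
  have hcap : cap p (Vset g l) ≤ capOpen p (Vset g l) := by
    unfold cap
    exact iInf₂_le _ ⟨Subset.rfl, Vset_open g l⟩
  refine hcap.trans ?_
  unfold capOpen
  refine iSup₂_le fun S hS => ?_
  obtain ⟨hSV, hSc⟩ := hS
  have hin : ∀ x ∈ S, ∃ r r', 0 < r ∧ r' < r ∧
      ENNReal.ofReal l * volume (ball x r) < ∫⁻ y in ball x r', ‖g y‖ₑ :=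
    fun x hx => Vset_inner (hSV hx)
  choose! r r' hr0 hr' hlt using hin
  obtain ⟨t, htS, hcov⟩ := hSc.elim_nhds_subcover (fun x => ball x (r x - r' x))
    (fun x hx => ball_mem_nhds x (by linarith [hr' x hx]))
  have hev : ∀ᶠ k in atTop, ∀ z ∈ t, ENNReal.ofReal l * volume (ball z (r z)) <
      ∫⁻ y in ball z (r' z), ‖vmol (seqB n k) g y‖ₑ := by
    rw [Finset.eventually_all]
    exact fun z hz => vmol_fatou hgl _ (hlt z (htS z hz))
  obtain ⟨k, hk⟩ := hev.exists
  set φ := seqB n k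
  have hbd : Bornology.IsBounded (⋃ z ∈ t, ball z (r' z)) :=
    (Bornology.isBounded_biUnion_finset t).2 fun z _ => isBounded_ball
  obtain ⟨R0, hR0⟩ := hbd.subset_ball (0 : En n)
  obtain ⟨χ, hχs, hχc, hχ1, hχb, hχd⟩ := hM (max 1 R0) (le_max_left _ _)
  have hvs : ContDiff ℝ (⊤ : ℕ∞) (vmol φ g) := vmol_contDiff φ hgl
  set G : En n → En n := fun x => χ x • vmol φ g x with hG
  have hGs : ContDiff ℝ 1 G := (hχs.smul hvs).of_le (by simp)
  have hGc : HasCompactSupport G := hχc.smul_right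
  have hcapK := H G hGs hGc S hSc l hl (∑ z ∈ t, |r z|) ?_
  · refine hcapK.trans ?_
    have hpt : ∀ x, ‖fderiv ℝ G x‖ₑ ^ p ≤
        2 ^ p * (‖fderiv ℝ (vmol φ g) x‖ₑ ^ p + (M : ℝ≥0∞) ^ p * ‖vmol φ g x‖ₑ ^ p) := by
      intro x
      have hd : HasFDerivAt G _ x := ((hχs.differentiable (by simp) x).hasFDerivAt).smul
        ((hvs.differentiable (by simp) x).hasFDerivAt)
      rw [← ENNReal.mul_rpow_of_nonneg _ _ hp0]
      refine le_trans ?_ (aux_add_pow hp _ _)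
      gcongr
      rw [hd.fderiv]
      refine le_trans (enorm_add_le (E := En n →L[ℝ] En n) _ _) ?_
      gcongr
      · rw [enorm_smul]
        refine mul_le_of_le_one_left zero_le ?_
        rw [← ofReal_norm]
        simpa using hχb x
      · have h1 : ‖(fderiv ℝ χ x).smulRight (vmol φ g x)‖ ≤ M * ‖vmol φ g x‖ := by
          rw [ContinuousLinearMap.norm_smulRight_apply]
          gcongr
          exact hχd x
        rw [← ofReal_norm, ← ofReal_norm]
        refine (ENNReal.ofReal_le_ofReal h1).trans (le_of_eq ?_)
        rw [ENNReal.ofReal_mul M.coe_nonneg]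
        simp
    have hint : ∫⁻ x, ‖fderiv ℝ G x‖ₑ ^ p ≤ 2 ^ p * ((n : ℝ≥0∞) ^ p * (1 + (M : ℝ≥0∞) ^ p)) *
        ((∫⁻ x, (∑ i, ‖h x i‖ₑ) ^ p) + ∫⁻ x, ‖g x‖ₑ ^ p) := by
      calc _ ≤ ∫⁻ x, 2 ^ p * (‖fderiv ℝ (vmol φ g) x‖ₑ ^ p + (M : ℝ≥0∞) ^ p * ‖vmol φ g x‖ₑ ^ p) :=
            lintegral_mono hpt
        _ = 2 ^ p * ((∫⁻ x, ‖fderiv ℝ (vmol φ g) x‖ₑ ^ p) +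
              (M : ℝ≥0∞) ^ p * ∫⁻ x, ‖vmol φ g x‖ₑ ^ p) := by
            rw [lintegral_const_mul' _ _ h2t, lintegral_add_left
              ((measurable_fderiv ℝ (vmol φ g)).enorm.pow_const p), lintegral_const_mul' _ _ hMt]
        _ ≤ 2 ^ p * ((n : ℝ≥0∞) ^ p * (∫⁻ x, (∑ i, ‖h x i‖ₑ) ^ p) +
              (M : ℝ≥0∞) ^ p * ((n : ℝ≥0∞) ^ p * ∫⁻ x, ‖g x‖ₑ ^ p)) := by
            gcongr
            · exact vmol_fderiv_int hp φ hhm hgl hgw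
            · exact vmol_int hp φ hgm
        _ ≤ 2 ^ p * ((n : ℝ≥0∞) ^ p * ((1 + (M : ℝ≥0∞) ^ p) * ∫⁻ x, (∑ i, ‖h x i‖ₑ) ^ p) +
              (n : ℝ≥0∞) ^ p * ((1 + (M : ℝ≥0∞) ^ p) * ∫⁻ x, ‖g x‖ₑ ^ p)) := by
            gcongr 2
            · gcongr 1
              exact le_mul_of_one_le_left zero_le le_self_add
            · rw [mul_left_comm]
              gcongr
              exact le_add_self
        _ = _ := by ring
    calc _ ≤ C * ENNReal.ofReal (1 / l) ^ p * (2 ^ p * ((n : ℝ≥0∞) ^ p * (1 + (M : ℝ≥0∞) ^ p)) *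
        ((∫⁻ x, (∑ i, ‖h x i‖ₑ) ^ p) + ∫⁻ x, ‖g x‖ₑ ^ p)) := by gcongr
      _ = _ := by ring
  · intro y hy
    have := hcov hy
    simp only [mem_iUnion] at this
    obtain ⟨z, hz, hyz⟩ := this
    have hrz := hr0 z (htS z hz)
    refine ⟨r z, hrz, ?_, ?_⟩
    · exact (le_abs_self _).trans
        (Finset.single_le_sum (f := fun z => |r z|) (fun _ _ => abs_nonneg _) hz)
    · have e : volume (closedBall y (r z)) = volume (ball z (r z)) := by
        rw [Measure.addHaar_closedBall _ _ hrz.le, Measure.addHaar_ball_of_pos _ _ hrz]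
      rw [e]
      refine (hk z hz).le.trans ?_
      calc ∫⁻ y in ball z (r' z), ‖vmol φ g y‖ₑ = ∫⁻ y in ball z (r' z), ‖G y‖ₑ := by
            apply setLIntegral_congr_fun measurableSet_ball
            intro w hw
            have : w ∈ ball (0 : En n) (max 1 R0) :=
              ball_subset_ball (le_max_right _ _) (hR0 (mem_biUnion (Finset.mem_coe.2 hz) hw))
            simp only [hG, hχ1 w this, one_smul]
        _ ≤ _ := by
            apply lintegral_mono_set
            refine ball_subset_closedBall.trans (closedBall_subset_closedBall' ?_)
            rw [mem_ball, dist_comm] at hyz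
            linarith

end

section
open MeasureTheory Metric Filter Set
open scoped ENNReal Topology NNReal

theorem aux_dilate {n : ℕ} (c : En n) {ρ : ℝ} (hρ : 0 < ρ) {Φ : En n → ℝ≥0∞} (hΦ : Measurable Φ) :
    ∫⁻ z in ball (0 : En n) 1, Φ (c + ρ • z) ≤
      ENNReal.ofReal (ρ⁻¹ ^ n) * ∫⁻ w in ball c ρ, Φ w := by
  have h := aux_push (K := Real.toNNReal ρ⁻¹) (T := fun z => c + ρ • z)
    (T' := fun w => ρ⁻¹ • (w - c)) (S := ball (0 : En n) 1) (B := ball c ρ)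
    (by fun_prop) ?_ measurableSet_ball ?_ ?_ hΦ
  · convert h using 2
    rw [ENNReal.ofReal_pow (by positivity)]; rfl
  · apply LipschitzWith.of_dist_le_mul
    intro u v
    rw [Real.coe_toNNReal _ (by positivity), dist_eq_norm, dist_eq_norm, ← smul_sub, norm_smul,
      Real.norm_of_nonneg (by positivity)]
    simp
  · intro z _
    simp [smul_smul, hρ.ne']
  · intro z hz
    rw [mem_ball_zero_iff] at hz
    rw [mem_ball, dist_eq_norm, add_sub_cancel_left, norm_smul, Real.norm_of_nonneg hρ.le]
    nlinarith

theorem ballAvg_eq {n : ℕ} (F : En n → ℝ) (x : En n) {r : ℝ} (hr : 0 < r) :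
    ballAvg F x r = ⨍ z in ball (0 : En n) 1, F (x + r • z) := by
  unfold ballAvg
  rw [setAverage_eq, setAverage_eq]
  have h1 : ∫ z in ball (0 : En n) 1, F (x + r • z) = |(r ^ n)⁻¹| • ∫ w in ball (0 : En n) r, F (x + w) := by
    have := Measure.setIntegral_comp_smul (volume : Measure (En n)) (fun w => F (x + w))
      (s := ball (0 : En n) 1) hr.ne'
    rw [smul_unitBall_of_pos hr, finrank_euclideanSpace_fin] at this
    exact this
  have h2 : ∫ w in ball (0 : En n) r, F (x + w) = ∫ w in ball x r, F w := by
    rw [← integral_indicator measurableSet_ball, ← integral_indicator measurableSet_ball,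
      ← integral_add_left_eq_self ((ball x r).indicator F) x]
    congr 1; ext w
    by_cases hw : w ∈ ball (0 : En n) r
    · rw [indicator_of_mem hw, indicator_of_mem]
      simpa using hw
    · rw [indicator_of_notMem hw, indicator_of_notMem]
      simpa using hw
  rw [h1, h2, smul_smul]
  congr 1
  rw [Measure.real, Measure.real, Measure.addHaar_ball_of_pos _ _ hr, ENNReal.toReal_mul,
    ENNReal.toReal_ofReal (by positivity), finrank_euclideanSpace_fin, abs_of_pos (by positivity),
    mul_inv, mul_comm]

theorem aux_smooth_avg {n : ℕ} {F : En n → ℝ} (hF : ContDiff ℝ 1 F) {x y : En n} {r s : ℝ}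
    (hr : 0 < r) (hs : 0 < s) {Λ : ℝ≥0∞}
    (hΛ : ∀ t ∈ Ioc (0:ℝ) 1, ∫⁻ w in ball (x + t • (y - x)) (r + t * (s - r)), ‖fderiv ℝ F w‖ₑ ≤
      Λ * ENNReal.ofReal ((r + t * (s - r)) ^ n)) :
    ‖ballAvg F y s - ballAvg F x r‖ₑ ≤
      (‖y - x‖ₑ + ‖s - r‖ₑ) * ((volume (ball (0 : En n) 1))⁻¹ * Λ) := by
  set B := ball (0 : En n) 1 with hB
  have hB0 : volume B ≠ 0 := (measure_ball_pos _ _ one_pos).ne'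
  have hB1 : volume B ≠ ∞ := measure_ball_lt_top.ne
  set D : ℝ≥0∞ := ‖y - x‖ₑ + ‖s - r‖ₑ with hD
  have hDt : D ≠ ∞ := by simp [hD]
  have hFc : Continuous F := hF.continuous
  have hfd : Continuous (fderiv ℝ F) := hF.continuous_fderiv one_ne_zero
  have hint : ∀ (a : En n) (ρ : ℝ), IntegrableOn (fun z => F (a + ρ • z)) B := by
    intro a ρ
    have : Continuous fun z : En n => F (a + ρ • z) := hFc.comp (by fun_prop)
    exact (this.continuousOn.integrableOn_compact (isCompact_closedBall 0 1)).mono_set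
      ball_subset_closedBall
  rw [ballAvg_eq F y hs, ballAvg_eq F x hr, setAverage_eq, setAverage_eq, ← smul_sub,
    ← integral_sub (hint _ _) (hint _ _), enorm_smul]
  have e1 : ‖(volume.real B)⁻¹‖ₑ = (volume B)⁻¹ := by
    rw [Real.enorm_eq_ofReal (by positivity), Measure.real, ENNReal.ofReal_inv_of_pos
      (ENNReal.toReal_pos hB0 hB1), ENNReal.ofReal_toReal hB1]
  rw [e1]
  have hpt : ∀ z ∈ B, ‖F (y + s • z) - F (x + r • z)‖ₑ ≤
      D * ∫⁻ t in Ioc (0:ℝ) 1, ‖fderiv ℝ F (x + t • (y - x) + (r + t * (s - r)) • z)‖ₑ := by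
    intro z hz
    rw [hB, mem_ball_zero_iff] at hz
    refine (aux_ftc hF (x + r • z) (y + s • z)).trans ?_
    gcongr ?_ * ?_
    · have : y + s • z - (x + r • z) = (y - x) + (s - r) • z := by
        simp only [sub_smul]; abel
      rw [this]
      refine (enorm_add_le _ _).trans ?_
      rw [enorm_smul, hD]
      refine add_le_add le_rfl (mul_le_of_le_one_right zero_le ?_)
      rw [← ofReal_norm]; exact ENNReal.ofReal_le_one.2 hz.le
    · apply le_of_eq
      congr 1; ext t
      congr 2
      simp only [add_smul, mul_smul, smul_sub, sub_smul, smul_add]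
      abel_nf
  have hm3 : Measurable fun q : En n × ℝ =>
      ‖fderiv ℝ F (x + q.2 • (y - x) + (r + q.2 * (s - r)) • q.1)‖ₑ := by
    have : Continuous fun q : En n × ℝ =>
      fderiv ℝ F (x + q.2 • (y - x) + (r + q.2 * (s - r)) • q.1) := hfd.comp (by fun_prop)
    exact this.enorm.measurable
  calc _ ≤ (volume B)⁻¹ * ∫⁻ z in B, ‖F (y + s • z) - F (x + r • z)‖ₑ := by
        gcongr; exact enorm_integral_le_lintegral_enorm _
    _ ≤ (volume B)⁻¹ * ∫⁻ z in B, D *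
          ∫⁻ t in Ioc (0:ℝ) 1, ‖fderiv ℝ F (x + t • (y - x) + (r + t * (s - r)) • z)‖ₑ := by
        gcongr 1
        exact setLIntegral_mono' measurableSet_ball hpt
    _ = (volume B)⁻¹ * (D * ∫⁻ t in Ioc (0:ℝ) 1, ∫⁻ z in B,
          ‖fderiv ℝ F (x + t • (y - x) + (r + t * (s - r)) • z)‖ₑ) := by
        rw [lintegral_const_mul' _ _ hDt, lintegral_lintegral_swap
          (f := fun z t => ‖fderiv ℝ F (x + t • (y - x) + (r + t * (s - r)) • z)‖ₑ)
          hm3.aemeasurable]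
    _ ≤ (volume B)⁻¹ * (D * ∫⁻ t in Ioc (0:ℝ) 1, Λ) := by
        gcongr 2
        refine setLIntegral_mono' measurableSet_Ioc fun t ht => ?_
        have hρ : 0 < r + t * (s - r) := by nlinarith [ht.1, ht.2]
        refine (aux_dilate _ hρ hfd.enorm.measurable).trans ?_
        calc _ ≤ ENNReal.ofReal ((r + t * (s - r))⁻¹ ^ n) *
              (Λ * ENNReal.ofReal ((r + t * (s - r)) ^ n)) := by gcongr; exact hΛ t ht
          _ = Λ * (ENNReal.ofReal ((r + t * (s - r))⁻¹ ^ n) *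
                ENNReal.ofReal ((r + t * (s - r)) ^ n)) := by ring
          _ = Λ := by
              rw [← ENNReal.ofReal_mul (by positivity), ← mul_pow, inv_mul_cancel₀ hρ.ne']
              simp
    _ = _ := by simp; ring

theorem aux_mol_ball {n : ℕ} (φ : ContDiffBump (0 : En n)) {f : En n → ℝ} {g : En n → En n}
    (hf : LocallyIntegrable f volume) (hgm : AEStronglyMeasurable g volume)
    (hg : HasWeakGradientOn univ f g) {c : En n} {ρ : ℝ} (hφ : φ.rOut ≤ ρ) :
    ∫⁻ w in ball c ρ, ‖fderiv ℝ (mol φ f) w‖ₑ ≤ n * ∫⁻ w in ball c (2 * ρ), ‖g w‖ₑ := by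
  set Ψ' := hgm.enorm.mk (fun x => ‖g x‖ₑ) with hΨ'
  have hm : Measurable Ψ' := hgm.enorm.measurable_mk
  have e1 : ∀ x, ∫⁻ t, ‖φ.normed volume t‖ₑ * ‖g (x - t)‖ₑ =
      ∫⁻ t, ‖φ.normed volume t‖ₑ * Ψ' (x - t) := by
    intro x
    apply lintegral_congr_ae
    have := (Measure.measurePreserving_sub_left (volume : Measure (En n)) x).quasiMeasurePreserving.ae_eq
      hgm.enorm.ae_eq_mk
    filter_upwards [this] with t ht
    simp only [Function.comp] at ht
    rw [ht]
  have e2 : ∫⁻ w in ball c (2 * ρ), ‖g w‖ₑ = ∫⁻ w in ball c (2 * ρ), Ψ' w :=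
    lintegral_congr_ae (ae_restrict_of_ae hgm.enorm.ae_eq_mk)
  rw [e2]
  have hφm : Measurable fun t => ‖φ.normed (volume : Measure (En n)) t‖ₑ :=
    φ.continuous_normed.enorm.measurable
  calc _ ≤ ∫⁻ w in ball c ρ, n * ∫⁻ t, ‖φ.normed volume t‖ₑ * Ψ' (w - t) := by
        gcongr with w
        rw [← e1]
        exact mol_fderiv_le φ hf hg w
    _ = n * ∫⁻ t, ∫⁻ w in ball c ρ, ‖φ.normed volume t‖ₑ * Ψ' (w - t) := by
        rw [lintegral_const_mul' _ _ (by simp)]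
        congr 1
        apply lintegral_lintegral_swap (f := fun w t => ‖φ.normed volume t‖ₑ * Ψ' (w - t))
        apply Measurable.aemeasurable
        exact (hφm.comp measurable_snd).mul
          (hm.comp (by fun_prop : Measurable fun q : En n × En n => q.1 - q.2))
    _ ≤ n * ∫⁻ t, ‖φ.normed volume t‖ₑ * ∫⁻ w in ball c (2 * ρ), Ψ' w := by
        gcongr with t
        rw [lintegral_const_mul' _ _ (by simp)]
        by_cases ht : t ∈ ball (0 : En n) φ.rOut
        · refine mul_le_mul_right ?_ _
          rw [← lintegral_indicator measurableSet_ball, ← lintegral_indicator measurableSet_ball,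
            ← lintegral_sub_right_eq_self ((ball c (2 * ρ)).indicator Ψ') t]
          apply lintegral_mono
          intro w
          by_cases hw : w ∈ ball c ρ
          · show (ball c ρ).indicator _ w ≤ (ball c (2 * ρ)).indicator Ψ' (w - t)
            rw [indicator_of_mem hw, indicator_of_mem]
            rw [mem_ball_zero_iff] at ht
            rw [mem_ball, dist_eq_norm] at hw ⊢
            calc ‖w - t - c‖ = ‖(w - c) - t‖ := by congr 1; abel
              _ ≤ ‖w - c‖ + ‖t‖ := norm_sub_le _ _
              _ < 2 * ρ := by linarith
          · show (ball c ρ).indicator _ w ≤ _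
            rw [indicator_of_notMem hw]
            exact zero_le
        · have : φ.normed (volume : Measure (En n)) t = 0 := by
            have h0 := φ.support_normed_eq (μ := (volume : Measure (En n)))
            rw [← h0] at ht
            simpa using ht
          simp [this]
    _ = _ := by rw [lintegral_mul_const _ hφm, aux_bump_enorm, one_mul]

end

section
open MeasureTheory Metric Filter Set
open scoped ENNReal Topology NNReal

theorem aux_setInt_shift {n : ℕ} (f : En n → ℝ) (x t : En n) (r : ℝ) :
    ∫ w in ball x r, f (w - t) = ∫ w in ball (x - t) r, f w := by
  rw [← integral_indicator measurableSet_ball, ← integral_indicator measurableSet_ball,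
    ← integral_sub_right_eq_self ((ball (x - t) r).indicator f) t]
  congr 1; ext w
  by_cases hw : w ∈ ball x r
  · rw [indicator_of_mem hw, indicator_of_mem]
    simpa using hw
  · rw [indicator_of_notMem hw, indicator_of_notMem]
    simpa using hw

theorem aux_int_ball_cont {n : ℕ} {f : En n → ℝ} (hf : LocallyIntegrable f volume) {r : ℝ}
    (hr : 0 < r) : Continuous fun z : En n => ∫ w in ball z r, f w := by
  have : (fun z : En n => ∫ w in ball z r, f w) = fun z => ∫ w, (ball z r).indicator f w := by
    ext z; rw [integral_indicator measurableSet_ball]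
  rw [this, continuous_iff_continuousAt]
  intro z0
  apply continuousAt_of_dominated (bound := (ball z0 (r + 1)).indicator fun w => ‖f w‖)
  · exact Eventually.of_forall fun z => hf.aestronglyMeasurable.indicator measurableSet_ball
  · filter_upwards [ball_mem_nhds z0 one_pos] with z hz
    refine Eventually.of_forall fun w => ?_
    rw [norm_indicator_eq_indicator_norm]
    refine indicator_le_indicator_of_subset ?_ (fun _ => norm_nonneg _) w
    apply ball_subset_ball'
    rw [mem_ball] at hz
    linarith
  · rw [integrable_indicator_iff measurableSet_ball]
    exact ((hf.integrableOn_isCompact (isCompact_closedBall z0 (r + 1))).mono_set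
      ball_subset_closedBall).norm
  · have h0 : volume (sphere z0 r) = 0 := Measure.addHaar_sphere_of_ne_zero _ _ hr.ne'
    have h1 : ∀ᵐ w, w ∉ sphere z0 r := measure_eq_zero_iff_ae_notMem.1 h0
    filter_upwards [h1] with w hw
    rw [mem_sphere] at hw
    rcases lt_or_gt_of_ne hw with h | h
    · have : ∀ᶠ z in 𝓝 z0, dist w z < r :=
        (continuous_const.dist continuous_id).continuousAt.eventually_lt continuousAt_const h
      have h2 : (fun _ => f w) =ᶠ[𝓝 z0] fun z => (ball z r).indicator f w := by
        filter_upwards [this] with z hz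
        rw [indicator_of_mem (mem_ball.2 hz)]
      exact continuousAt_const.congr h2
    · have : ∀ᶠ z in 𝓝 z0, r < dist w z :=
        continuousAt_const.eventually_lt (continuous_const.dist continuous_id).continuousAt h
      have h2 : (fun _ => (0:ℝ)) =ᶠ[𝓝 z0] fun z => (ball z r).indicator f w := by
        filter_upwards [this] with z hz
        rw [indicator_of_notMem]
        rw [mem_ball]; exact not_lt.2 hz.le
      exact continuousAt_const.congr h2

theorem aux_mol_int {n : ℕ} (φ : ContDiffBump (0 : En n)) {f : En n → ℝ}
    (hf : LocallyIntegrable f volume) (x : En n) (r : ℝ) :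
    ∫ w in ball x r, mol φ f w = mol φ (fun z => ∫ w in ball z r, f w) x := by
  set G := (ball x (r + φ.rOut)).indicator f with hG
  have hGi : Integrable G volume := by
    rw [hG, integrable_indicator_iff measurableSet_ball]
    exact (hf.integrableOn_isCompact (isCompact_closedBall x (r + φ.rOut))).mono_set
      ball_subset_closedBall
  have hpt : ∀ w ∈ ball x r, ∀ t, φ.normed volume t * f (w - t) = φ.normed volume t * G (w - t) := by
    intro w hw t
    by_cases ht : t ∈ ball (0 : En n) φ.rOut
    · rw [hG, indicator_of_mem]
      rw [mem_ball_zero_iff] at ht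
      rw [mem_ball, dist_eq_norm] at hw ⊢
      calc ‖w - t - x‖ = ‖(w - x) - t‖ := by congr 1; abel
        _ ≤ ‖w - x‖ + ‖t‖ := norm_sub_le _ _
        _ < _ := by linarith
    · have : φ.normed (volume : Measure (En n)) t = 0 := by
        have h0 := φ.support_normed_eq (μ := (volume : Measure (En n)))
        rw [← h0] at ht
        simpa using ht
      simp [this]
  have hI : Integrable (fun q : En n × En n => φ.normed volume q.2 * G (q.1 - q.2))
      ((volume.restrict (ball x r)).prod volume) := by
    have := Integrable.convolution_integrand (ContinuousLinearMap.lsmul ℝ ℝ)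
      (φ.integrable_normed (μ := (volume : Measure (En n)))) hGi
    refine (this.mono_measure ?_)
    exact Measure.prod_mono Measure.restrict_le_self le_rfl
  calc _ = ∫ w in ball x r, ∫ t, φ.normed volume t * G (w - t) := by
        refine setIntegral_congr_fun measurableSet_ball fun w hw => ?_
        show mol φ f w = _
        rw [mol_apply]
        congr 1; ext t
        exact hpt w hw t
    _ = ∫ t, ∫ w in ball x r, φ.normed volume t * G (w - t) :=
        integral_integral_swap (f := fun w t => φ.normed volume t * G (w - t)) hI
    _ = _ := by
        rw [mol_apply]
        congr 1; ext t
        rw [← aux_setInt_shift, ← integral_const_mul]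
        refine setIntegral_congr_fun measurableSet_ball fun w hw => ?_
        exact (hpt w hw t).symm

theorem aux_avg_tendsto {n : ℕ} {f : En n → ℝ} (hf : LocallyIntegrable f volume) (x : En n) {r : ℝ}
    (hr : 0 < r) :
    Tendsto (fun k => ballAvg (mol (seqB n k) f) x r) atTop (𝓝 (ballAvg f x r)) := by
  unfold ballAvg
  simp only [setAverage_eq, aux_mol_int _ hf]
  apply Tendsto.const_smul
  exact ContDiffBump.convolution_tendsto_right_of_continuous (seqB_tendsto n)
    (aux_int_ball_cont hf hr) x

theorem aux_key {n : ℕ} {f : En n → ℝ} {g : En n → En n}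
    (hf : LocallyIntegrable f volume) (hgm : AEStronglyMeasurable g volume)
    (hg : HasWeakGradientOn univ f g) {x y : En n} {r s : ℝ}
    (hr : 0 < r) (hs : 0 < s) {Λ : ℝ≥0∞}
    (hΛ : ∀ t ∈ Ioc (0:ℝ) 1, ∫⁻ w in ball (x + t • (y - x)) (2 * (r + t * (s - r))), ‖g w‖ₑ ≤
      Λ * ENNReal.ofReal ((r + t * (s - r)) ^ n)) :
    ‖ballAvg f y s - ballAvg f x r‖ₑ ≤
      (‖y - x‖ₑ + ‖s - r‖ₑ) * ((volume (ball (0 : En n) 1))⁻¹ * (n * Λ)) := by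
  have ht := ((aux_avg_tendsto hf y hs).sub (aux_avg_tendsto hf x hr)).enorm
  refine le_of_tendsto ht ?_
  have h1 : ∀ᶠ k in atTop, (seqB n k).rOut < min r s :=
    (seqB_tendsto n).eventually_lt_const (lt_min hr hs)
  filter_upwards [h1] with k hk
  refine aux_smooth_avg ((mol_contDiff _ hf).of_le (by exact_mod_cast le_top)) hr hs fun t ht => ?_
  have hm : min r s ≤ r + t * (s - r) := by
    rcases le_total r s with h | h
    · rw [min_eq_left h]; nlinarith [ht.1, ht.2]
    · rw [min_eq_right h]; nlinarith [ht.1, ht.2]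
  refine (aux_mol_ball _ hf hgm hg (hk.le.trans hm)).trans ?_
  rw [mul_assoc]
  exact mul_le_mul_right (hΛ t ht) _

end

section
open MeasureTheory Metric Filter Set
open scoped ENNReal Topology NNReal

theorem aux_lip_avg {n : ℕ} {f : En n → ℝ} {g : En n → En n}
    (hf : LocallyIntegrable f volume) (hgm : AEStronglyMeasurable g volume)
    (hg : HasWeakGradientOn univ f g) {l : ℝ} (hl : 0 < l) {x y : En n} (hx : x ∉ Vset g l) {r s : ℝ}
    (hr : 0 < r) (hs : 0 < s)
    (hsub : ∀ t ∈ Ioc (0:ℝ) 1, dist (x + t • (y - x)) x ≤ r + t * (s - r)) :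
    |ballAvg f y s - ballAvg f x r| ≤ (n * (l * 3 ^ n)) * (dist y x + |s - r|) := by
  set B := ball (0 : En n) 1 with hB
  have hB0 : volume B ≠ 0 := (measure_ball_pos _ _ one_pos).ne'
  have hB1 : volume B ≠ ∞ := measure_ball_lt_top.ne
  have h := aux_key (Λ := ENNReal.ofReal (l * 3 ^ n) * volume B) hf hgm hg hr hs (x := x) (y := y) ?_
  · have e : (‖y - x‖ₑ + ‖s - r‖ₑ) * ((volume (ball (0 : En n) 1))⁻¹ *
        (n * (ENNReal.ofReal (l * 3 ^ n) * volume B))) =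
        ENNReal.ofReal ((n * (l * 3 ^ n)) * (dist y x + |s - r|)) := by
      rw [ENNReal.ofReal_mul (p := n * (l * 3 ^ n)) (by positivity),
        ENNReal.ofReal_mul (p := (n : ℝ)) (by positivity),
        ENNReal.ofReal_add (by positivity) (by positivity), ENNReal.ofReal_natCast, dist_eq_norm,
        ofReal_norm, ← Real.norm_eq_abs, ofReal_norm, ← hB]
      calc _ = ((volume B)⁻¹ * volume B) * ((‖y - x‖ₑ + ‖s - r‖ₑ) *
            (n * (ENNReal.ofReal (l * 3 ^ n)))) := by ring
        _ = _ := by rw [ENNReal.inv_mul_cancel hB0 hB1, one_mul, mul_comm]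
    rw [e, ← ofReal_norm, Real.norm_eq_abs] at h
    exact (ENNReal.ofReal_le_ofReal_iff (by positivity)).1 h
  · intro t ht
    have hρ : 0 < r + t * (s - r) := by nlinarith [ht.1, ht.2]
    have h1 : ∫⁻ w in ball x (3 * (r + t * (s - r))), ‖g w‖ₑ ≤
        ENNReal.ofReal l * volume (ball x (3 * (r + t * (s - r)))) := by
      by_contra hcon
      exact hx ⟨_, by positivity, not_le.1 hcon⟩
    have h2 : ball (x + t • (y - x)) (2 * (r + t * (s - r))) ⊆ ball x (3 * (r + t * (s - r))) := by
      apply ball_subset_ball'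
      linarith [hsub t ht]
    refine (lintegral_mono_set h2).trans (h1.trans (le_of_eq ?_))
    rw [Measure.addHaar_ball_of_pos _ _ (by positivity), finrank_euclideanSpace_fin, mul_pow,
      ENNReal.ofReal_mul (by positivity), ENNReal.ofReal_mul (by positivity)]
    ring

theorem aux_limit {A : ℝ → ℝ} {c : ℝ} (hc : 0 ≤ c)
    (hA : ∀ r s, 0 < r → 0 < s → |A s - A r| ≤ c * |s - r|) :
    ∃ L, Tendsto A (𝓝[>] 0) (𝓝 L) ∧ ∀ r, 0 < r → |A r - L| ≤ c * r := by
  have hL : LipschitzOnWith (Real.toNNReal c) A (Ioi 0) := by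
    apply LipschitzOnWith.of_dist_le_mul
    intro s hs r hr
    rw [Real.coe_toNNReal _ hc]
    exact hA r s hr hs
  obtain ⟨L, hT⟩ : ∃ L, Tendsto A (𝓝[>] 0) (𝓝 L) := by
    have hcau : Cauchy (map A (𝓝[>] 0)) := by
      have : Cauchy (𝓝[>] (0:ℝ)) := cauchy_nhds.mono inf_le_left
      exact this.map_of_le hL.uniformContinuousOn inf_le_right
    exact CompleteSpace.complete hcau
  refine ⟨L, hT, fun r hr => ?_⟩
  have h1 : Tendsto (fun s => |A r - A s|) (𝓝[>] 0) (𝓝 |A r - L|) := (tendsto_const_nhds.sub hT).abs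
  refine le_of_tendsto h1 ?_
  filter_upwards [Ioo_mem_nhdsGT hr] with s hs
  refine (hA s r hs.1 hr).trans ?_
  gcongr
  rw [abs_of_pos (by linarith [hs.2])]; linarith [hs.1]

theorem aux_preciseRep {n : ℕ} {f : En n → ℝ} {x : En n} {L : ℝ}
    (h : Tendsto (fun r => ballAvg f x r) (𝓝[>] 0) (𝓝 L)) : preciseRep f x = L := by
  have hex : ∃ L, Tendsto (fun r => ballAvg f x r) (nhdsWithin 0 (Ioi 0)) (nhds L) := ⟨L, h⟩
  unfold preciseRep
  rw [dif_pos hex]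
  exact tendsto_nhds_unique hex.choose_spec h

theorem aux_lip {n : ℕ} {f : En n → ℝ} {g : En n → En n}
    (hf : LocallyIntegrable f volume) (hgm : AEStronglyMeasurable g volume)
    (hg : HasWeakGradientOn univ f g) {l : ℝ} (hl : 0 < l) :
    ∃ K : ℝ≥0, LipschitzOnWith K (preciseRep f) (univ \ Vset g l) := by
  set c : ℝ := n * (l * 3 ^ n) with hc
  have hc0 : 0 ≤ c := by positivity
  have key : ∀ x ∉ Vset g l, ∀ r, 0 < r → |ballAvg f x r - preciseRep f x| ≤ c * r := by
    intro x hx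
    obtain ⟨L, h1, h2⟩ := aux_limit (A := fun r => ballAvg f x r) hc0 (by
      intro r s hr hs
      have := aux_lip_avg hf hgm hg hl (y := x) hx hr hs (by
        intro t ht
        simp only [sub_self, smul_zero, add_zero, dist_self]
        nlinarith [ht.1, ht.2])
      simpa using this)
    rw [aux_preciseRep h1]
    exact h2
  refine ⟨Real.toNNReal (3 * c), LipschitzOnWith.of_dist_le_mul ?_⟩
  intro y hy x hx
  rw [Real.coe_toNNReal _ (by positivity)]
  rcases eq_or_ne y x with rfl | hne
  · simp
  have hr : 0 < dist y x := dist_pos.2 hne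
  have h1 := key y hy.2 _ hr
  have h2 := key x hx.2 _ hr
  have h3 := aux_lip_avg hf hgm hg hl (y := y) hx.2 hr hr (by
    intro t ht
    rw [dist_eq_norm, add_sub_cancel_left, norm_smul, Real.norm_of_nonneg ht.1.le, ← dist_eq_norm]
    nlinarith [ht.1, ht.2])
  rw [sub_self, abs_zero, add_zero, ← hc] at h3
  rw [Real.dist_eq]
  rw [abs_le] at *
  constructor <;> linarith [h1.1, h1.2, h2.1, h2.2, h3.1, h3.2]

theorem aux_final {n : ℕ} (p : ℝ) (hp : 1 ≤ p) (f : En n → ℝ) (g : En n → En n)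
    (h : En n → Fin n → En n) (hf : MemW2p p f g h) :
    ∀ ε : ℝ≥0∞, 0 < ε → ∃ V : Set (En n), IsOpen V ∧ cap p V ≤ ε ∧
      ∃ K : ℝ≥0, LipschitzOnWith K (preciseRep f) (Set.univ \ V) := by
  intro ε hε
  obtain ⟨hfm, hgm, hfg, hgh, hfi, hgi, hhi⟩ := hf
  have hp0 : 0 < p := by linarith
  have hp1 : 1 ≤ ENNReal.ofReal p := by
    rw [← ENNReal.ofReal_one]; exact ENNReal.ofReal_le_ofReal hp
  have hfL : LocallyIntegrable f volume :=
    (aux_memLp_of hp hfm (by simpa [Real.norm_eq_abs] using hfi)).locallyIntegrable hp1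
  have hgM := aux_memLp_of hp hgm hgi
  have hgL : ∀ i, LocallyIntegrable (fun y => g y i) volume := by
    intro i
    have : MemLp (fun y => g y i) (ENNReal.ofReal p) volume := by
      refine hgM.mono ?_ (Eventually.of_forall fun y => PiLp.norm_apply_le (g y) i)
      exact (by fun_prop : Continuous fun v : En n => v i).comp_aestronglyMeasurable hgm
    exact this.locallyIntegrable hp1
  have hhn : ∀ i, AEStronglyMeasurable (fun x => ‖h x i‖) volume := by
    intro i
    have := ((hhi i).aestronglyMeasurable.aemeasurable.pow_const (1 / p))
    refine (this.congr (Eventually.of_forall fun x => ?_)).aestronglyMeasurable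
    show (‖h x i‖ ^ p) ^ (1 / p) = _
    rw [← Real.rpow_mul (norm_nonneg _), mul_one_div_cancel hp0.ne', Real.rpow_one]
  have hhm : ∀ i, AEMeasurable (fun x => ‖h x i‖ₑ) volume := by
    intro i
    refine (hhn i).enorm.congr (Eventually.of_forall fun x => ?_)
    exact enorm_norm _
  have hhM : ∀ i, MemLp (fun x => ‖h x i‖) (ENNReal.ofReal p) volume := by
    intro i
    exact aux_memLp_of hp (hhn i) (by simpa using hhi i)
  have hsum : MemLp (fun x => ∑ i, ‖h x i‖) (ENNReal.ofReal p) volume :=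
    memLp_finsetSum _ fun i _ => hhM i
  have hpn : ENNReal.ofReal p ≠ 0 := by simpa using hp0
  have hI1 : ∫⁻ x, (∑ i, ‖h x i‖ₑ) ^ p < ∞ := by
    have := lintegral_rpow_enorm_lt_top_of_eLpNorm_lt_top hpn ENNReal.ofReal_ne_top hsum.2
    rw [ENNReal.toReal_ofReal hp0.le] at this
    refine lt_of_le_of_lt (le_of_eq ?_) this
    congr 1; ext x; congr 1
    rw [Real.enorm_eq_ofReal (by positivity), ENNReal.ofReal_sum_of_nonneg (fun i _ => norm_nonneg _)]
    simp only [ofReal_norm]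
  have hI2 : ∫⁻ x, ‖g x‖ₑ ^ p < ∞ := by
    have := lintegral_rpow_enorm_lt_top_of_eLpNorm_lt_top hpn ENNReal.ofReal_ne_top hgM.2
    rwa [ENNReal.toReal_ofReal hp0.le] at this
  obtain ⟨C, hC, hcap⟩ := aux_L5 n p hp
  set I := (∫⁻ x, (∑ i, ‖h x i‖ₑ) ^ p) + ∫⁻ x, ‖g x‖ₑ ^ p with hIdef
  have hI : I ≠ ∞ := ENNReal.add_ne_top.2 ⟨hI1.ne, hI2.ne⟩
  have hT : Tendsto (fun l : ℝ => C * ENNReal.ofReal (1 / l) ^ p * I) atTop (𝓝 0) := by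
    have h1 : Tendsto (fun l : ℝ => 1 / l) atTop (𝓝 0) := by
      simpa using tendsto_inv_atTop_zero (𝕜 := ℝ)
    have h2 := ENNReal.tendsto_ofReal h1
    have h3 := h2.ennrpow_const p
    rw [ENNReal.ofReal_zero, ENNReal.zero_rpow_of_pos hp0] at h3
    have h4 := ENNReal.Tendsto.mul_const (ENNReal.Tendsto.const_mul h3 (Or.inr hC)) (Or.inr hI)
    simpa using h4
  obtain ⟨l, hl1, hl2⟩ := ((hT.eventually (Iio_mem_nhds hε)).and (eventually_gt_atTop 0)).exists
  refine ⟨Vset g l, Vset_open g l, (hcap g h hgm hhm hgL hgh l hl2).trans hl1.le, ?_⟩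
  exact aux_lip hfL hgm hfg hl2

end

/-- for `f ∈ W^{2,p}(ℝⁿ)`, the precise representative is `p`-Lipschitz
quasicontinuous. -/
theorem preciseRep_lipschitz_quasicontinuous {n : ℕ} (p : ℝ) (hp : 1 ≤ p)
    (f : En n → ℝ) (g : En n → En n) (h : En n → Fin n → En n)
    (hf : MemW2p p f g h) :
    ∀ ε : ℝ≥0∞, 0 < ε →
      ∃ V : Set (En n), IsOpen V ∧ cap p V ≤ ε ∧
        ∃ K : ℝ≥0, LipschitzOnWith K (preciseRep f) (Set.univ \ V) :=
  aux_final p hp f g h hf
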